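/- arXiv:1401.6905 — 7 statements merged into one kernel-verified Lean document; each statement's English description precedes it below -/
import Mathlib

section
/- Suppose d < 0 and γ ∈ ℝ are such that E[∫₀^{τ∧T} (f(X_s) − d) ds] ≤ γ for every stopping time τ and every T ≥ 0. If σ is an integrable stopping time (E[σ] < ∞) such that E[∫₀^σ f(X_s) ds + g(X_σ)] ≥ −‖g‖ − ε for some ε ≥ 0 (in particular, if σ is ε-optimal for the stopping problem sup_τ limsup_T E[∫₀^{τ∧T} f(X_s) ds + g(X_{τ∧T})], whose value is at least −‖g‖), then E[σ] ≤ (γ + 2‖g‖ + ε)/(−d). -/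
open MeasureTheory Filter Set
open scoped ENNReal Topology

/-!
By Fubini, the expected running reward up to a random time `τ` is the integral over the stochastic
interval between `0` and `τ`, a subset of `Ω × ℝ`, against `P ⊗ dt`. As `T → ∞` the stochastic
intervals of `min τ T` increase to that of `τ`, so the bound `γ` passes to the limit at an
integrable time `σ` and reads `E[∫₀^σ f(X_s) ds] - d E[σ] ≤ γ`. Near-optimality bounds
`E[∫₀^σ f(X_s) ds]` from below by `-2‖g‖ - ε`.
-/

lemma measurable_uncurry_of_isProgressive {ι Ω β : Type*} {m : MeasurableSpace Ω} [Preorder ι]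
    [MeasurableSpace ι] [TopologicalSpace ι] [OpensMeasurableSpace ι] [ClosedIicTopology ι]
    [(atTop : Filter ι).NeBot] [(atTop : Filter ι).IsCountablyGenerated] [MeasurableSpace β]
    {𝓕 : Filtration ι m} {u : ι → Ω → β} (hu : IsProgressive 𝓕 u) :
    Measurable (Function.uncurry u) := by
  obtain ⟨x, hx⟩ := exists_seq_tendsto (atTop : Filter ι)
  have hcover (p : ι × Ω) : ∃ n, p.1 ≤ x n := (hx.eventually_ge_atTop p.1).exists
  have hIic (n : ℕ) : Measurable fun p : Iic (x n) × Ω => u p.1 p.2 :=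
    (hu (x n)).mono (sup_le_sup_left (MeasurableSpace.comap_mono (𝓕.le _)) _) le_rfl
  have hemb (n : ℕ) : MeasurableEmbedding (Prod.map ((↑) : Iic (x n) → ι) (id : Ω → Ω)) :=
    (MeasurableEmbedding.subtype_coe measurableSet_Iic).prodMap .id
  intro s hs
  have hpreimage : Function.uncurry u ⁻¹' s
      = ⋃ n, Prod.map ((↑) : Iic (x n) → ι) id '' ((fun p => u p.1 p.2) ⁻¹' s) := by
    ext p
    simp only [mem_iUnion]
    refine ⟨fun hp => ?_, ?_⟩
    · obtain ⟨n, hn⟩ := hcover p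
      exact ⟨n, (⟨p.1, hn⟩, p.2), hp, rfl⟩
    · rintro ⟨n, q, hq, rfl⟩
      exact hq
  rw [hpreimage]
  exact .iUnion fun n => (hemb n).measurableSet_image' (hIic n hs)

section RegionBetween

variable {Ω F : Type*} {m0 : MeasurableSpace Ω} {μ : Measure Ω}
  [NormedAddCommGroup F] [NormedSpace ℝ F] {a b : Ω → ℝ} {u : Ω → ℝ → F}

lemma integral_indicator_regionBetween {ω : Ω} (hab : a ω ≤ b ω) :
    ∫ t, (regionBetween a b univ).indicator (Function.uncurry u) (ω, t)
      = ∫ t in a ω..b ω, u ω t := by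
  have hsection : (fun t => (regionBetween a b univ).indicator (Function.uncurry u) (ω, t))
      = (Ioo (a ω) (b ω)).indicator (u ω) := by
    ext t
    simp [indicator, regionBetween]
  rw [hsection, integral_indicator measurableSet_Ioo, intervalIntegral.integral_of_le hab,
    integral_Ioc_eq_integral_Ioo]

lemma integrable_intervalIntegral_of_integrableOn_regionBetween
    (ha : AEMeasurable a μ) (hb : AEMeasurable b μ) (hab : a ≤ᵐ[μ] b)
    (hu : IntegrableOn (Function.uncurry u) (regionBetween a b univ) (μ.prod volume)) :
    Integrable (fun ω => ∫ t in a ω..b ω, u ω t) μ := by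
  have hR : NullMeasurableSet (regionBetween a b univ) (μ.prod volume) :=
    nullMeasurableSet_regionBetween μ ha hb .univ
  refine (hu.integrable_indicator₀ hR).integral_prod_left.congr ?_
  filter_upwards [hab] with ω hω using integral_indicator_regionBetween hω

variable [SFinite μ]

lemma measure_regionBetween_univ_lt_top (ha : AEMeasurable a μ) (hb : AEMeasurable b μ)
    (hab : Integrable (b - a) μ) :
    μ.prod volume (regionBetween a b univ) < ∞ := by
  rw [volume_regionBetween_eq_lintegral ha.restrict hb.restrict MeasurableSet.univ,
    Measure.restrict_univ]
  exact hab.lintegral_lt_top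

lemma integral_intervalIntegral_eq_setIntegral_regionBetween
    (ha : AEMeasurable a μ) (hb : AEMeasurable b μ) (hab : a ≤ᵐ[μ] b)
    (hu : IntegrableOn (Function.uncurry u) (regionBetween a b univ) (μ.prod volume)) :
    ∫ ω, (∫ t in a ω..b ω, u ω t) ∂μ
      = ∫ p in regionBetween a b univ, Function.uncurry u p ∂(μ.prod volume) := by
  have hR : NullMeasurableSet (regionBetween a b univ) (μ.prod volume) :=
    nullMeasurableSet_regionBetween μ ha hb .univ
  rw [← integral_indicator₀ hR, integral_prod _ (hu.integrable_indicator₀ hR)]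
  refine integral_congr_ae ?_
  filter_upwards [hab] with ω hω using (integral_indicator_regionBetween hω).symm

end RegionBetween

section RandomTime

variable {Ω : Type*} {m0 : MeasurableSpace Ω} {P : Measure Ω} {τ : Ω → ℝ}

lemma monotone_regionBetween_min (a τ : Ω → ℝ) (s : Set Ω) :
    Monotone fun T : ℝ => regionBetween a (fun ω => min (τ ω) T) s :=
  fun _ _ hST _ hp => ⟨hp.1, hp.2.1, hp.2.2.trans_le (min_le_min_left _ hST)⟩

lemma iUnion_regionBetween_min (a τ : Ω → ℝ) (s : Set Ω) :
    ⋃ T : ℝ, regionBetween a (fun ω => min (τ ω) T) s = regionBetween a τ s := by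
  refine subset_antisymm (iUnion_subset fun T p hp => ?_) fun p hp => ?_
  · exact ⟨hp.1, hp.2.1, hp.2.2.trans_le (min_le_left _ _)⟩
  · exact mem_iUnion.2 ⟨τ p.1, hp.1, hp.2.1, by simpa only [min_self] using hp.2.2⟩

variable [SFinite P]

lemma tendsto_integral_intervalIntegral_min {F : Type*} [NormedAddCommGroup F] [NormedSpace ℝ F]
    {u : Ω → ℝ → F} (hτ : AEMeasurable τ P) (hτ0 : 0 ≤ᵐ[P] τ)
    (hu : IntegrableOn (Function.uncurry u) (regionBetween 0 τ univ) (P.prod volume)) :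
    Tendsto (fun T : ℝ => ∫ ω, (∫ t in (0 : ℝ)..min (τ ω) T, u ω t) ∂P) atTop
      (𝓝 (∫ ω, (∫ t in (0 : ℝ)..τ ω, u ω t) ∂P)) := by
  have h0 : AEMeasurable (0 : Ω → ℝ) P := aemeasurable_const
  have hmin (T : ℝ) : AEMeasurable (fun ω => min (τ ω) T) P := hτ.min aemeasurable_const
  have hunion := iUnion_regionBetween_min 0 τ univ
  have hlim := tendsto_setIntegral_of_monotone₀
    (s := fun T => regionBetween 0 (fun ω => min (τ ω) T) univ)
    (fun T => nullMeasurableSet_regionBetween P h0 (hmin T) .univ)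
    (monotone_regionBetween_min 0 τ univ) (hunion ▸ hu)
  rw [hunion, ← integral_intervalIntegral_eq_setIntegral_regionBetween h0 hτ hτ0 hu] at hlim
  refine hlim.congr' ?_
  filter_upwards [eventually_ge_atTop 0] with T hT
  have hmin0 : (0 : Ω → ℝ) ≤ᵐ[P] fun ω => min (τ ω) T := by
    filter_upwards [hτ0] with ω hω using le_min hω hT
  have huT : IntegrableOn (Function.uncurry u) (regionBetween 0 (fun ω => min (τ ω) T) univ)
      (P.prod volume) := hu.mono_set ((subset_iUnion _ T).trans_eq hunion)
  exact (integral_intervalIntegral_eq_setIntegral_regionBetween h0 (hmin T) hmin0 huT).symm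

lemma integrableOn_regionBetween_const (hτ : Integrable τ P) (d : ℝ) :
    IntegrableOn (fun _ => d) (regionBetween 0 τ univ) (P.prod volume) :=
  integrableOn_const (measure_regionBetween_univ_lt_top aemeasurable_const hτ.aemeasurable
    ((sub_zero τ).symm ▸ hτ)).ne

lemma integral_intervalIntegral_sub_const {r : Ω → ℝ → ℝ} (hτ : Integrable τ P)
    (hτ0 : 0 ≤ᵐ[P] τ)
    (hr : IntegrableOn (Function.uncurry r) (regionBetween 0 τ univ) (P.prod volume)) (d : ℝ) :
    ∫ ω, (∫ t in (0 : ℝ)..τ ω, (r ω t - d)) ∂P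
      = ∫ ω, (∫ t in (0 : ℝ)..τ ω, r ω t) ∂P - (∫ ω, τ ω ∂P) * d := by
  have h0 : AEMeasurable (0 : Ω → ℝ) P := aemeasurable_const
  have hd := integrableOn_regionBetween_const hτ d
  have hfubini {u : Ω → ℝ → ℝ} :=
    integral_intervalIntegral_eq_setIntegral_regionBetween (u := u) h0 hτ.aemeasurable hτ0
  calc ∫ ω, (∫ t in (0 : ℝ)..τ ω, (r ω t - d)) ∂P
      = ∫ p in regionBetween 0 τ univ, (Function.uncurry r p - d) ∂(P.prod volume) :=
        hfubini (hr.sub hd)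
    _ = ∫ ω, (∫ t in (0 : ℝ)..τ ω, r ω t) ∂P - ∫ ω, (∫ _ in (0 : ℝ)..τ ω, d) ∂P := by
        rw [integral_sub hr hd]
        exact congrArg₂ _ (hfubini hr).symm (hfubini (u := fun _ _ => d) hd).symm
    _ = ∫ ω, (∫ t in (0 : ℝ)..τ ω, r ω t) ∂P - (∫ ω, τ ω ∂P) * d := by
        simp only [intervalIntegral.integral_const, sub_zero, smul_eq_mul, integral_mul_const]

lemma integral_intervalIntegral_sub_integral_mul_le {r : Ω → ℝ → ℝ} {d γ : ℝ} (hτ : Integrable τ P)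
    (hτ0 : 0 ≤ᵐ[P] τ)
    (hr : IntegrableOn (Function.uncurry r) (regionBetween 0 τ univ) (P.prod volume))
    (hγ : ∀ T : ℝ, 0 ≤ T → ∫ ω, (∫ t in (0 : ℝ)..min (τ ω) T, (r ω t - d)) ∂P ≤ γ) :
    ∫ ω, (∫ t in (0 : ℝ)..τ ω, r ω t) ∂P - (∫ ω, τ ω ∂P) * d ≤ γ := by
  rw [← integral_intervalIntegral_sub_const hτ hτ0 hr d]
  refine le_of_tendsto (tendsto_integral_intervalIntegral_min hτ.aemeasurable hτ0
    (hr.sub (integrableOn_regionBetween_const hτ d))) ?_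
  filter_upwards [eventually_ge_atTop 0] with T hT using hγ T hT

end RandomTime

theorem stmt1_general {Ω : Type*} {m0 : MeasurableSpace Ω} {P : Measure Ω}
    [IsProbabilityMeasure P] {σ : Ω → ℝ} {r : Ω → ℝ → ℝ} {G : Ω → ℝ} {C d γ ε : ℝ}
    (hσ : Integrable σ P) (hσ0 : 0 ≤ᵐ[P] σ)
    (hr : IntegrableOn (Function.uncurry r) (regionBetween 0 σ univ) (P.prod volume))
    (hG : Integrable G P) (hGC : ∀ᵐ ω ∂P, G ω ≤ C) (hd : d < 0)
    (hγ : ∀ T : ℝ, 0 ≤ T → ∫ ω, (∫ t in (0 : ℝ)..min (σ ω) T, (r ω t - d)) ∂P ≤ γ)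
    (hval : -C - ε ≤ ∫ ω, ((∫ t in (0 : ℝ)..σ ω, r ω t) + G ω) ∂P) :
    ∫ ω, σ ω ∂P ≤ (γ + 2 * C + ε) / (-d) := by
  have hreward : Integrable (fun ω => ∫ t in (0 : ℝ)..σ ω, r ω t) P :=
    integrable_intervalIntegral_of_integrableOn_regionBetween aemeasurable_const
      hσ.aemeasurable hσ0 hr
  have hbound := integral_intervalIntegral_sub_integral_mul_le hσ hσ0 hr hγ
  have hterminal : ∫ ω, G ω ∂P ≤ C := by
    simpa only [integral_const, probReal_univ, one_smul] using
      integral_mono_ae hG (integrable_const C) hGC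
  rw [integral_add hreward hG] at hval
  rw [le_div_iff₀ (neg_pos.2 hd)]
  linarith

/-- From the uniform bound `E[∫₀^{τ∧T}(f(X_s) − d) ds] ≤ γ` (with `d < 0`)
applied to an integrable nearly-optimal stopping time `σ`, one gets
`E[σ] ≤ (γ + 2‖g‖ + ε)/(−d)`. -/
theorem stmt1
    {Ω : Type*} {m0 : MeasurableSpace Ω} (P : Measure Ω) [IsProbabilityMeasure P]
    (𝓕 : Filtration ℝ m0)
    {E : Type*} [MetricSpace E] [MeasurableSpace E] [BorelSpace E]
    (X : ℝ → Ω → E) (hX : ProgMeasurable 𝓕 X)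
    (f g : E → ℝ) (hf : Measurable f) (hg : Measurable g)
    (Cf Cg : ℝ) (hfb : ∀ x, |f x| ≤ Cf) (hgb : ∀ x, |g x| ≤ Cg)
    (d γ : ℝ) (hd : d < 0)
    (hγ : ∀ τ : Ω → ℝ, IsStoppingTime 𝓕 (fun ω => (τ ω : WithTop ℝ)) → (∀ ω, 0 ≤ τ ω) → ∀ T : ℝ, 0 ≤ T →
      ∫ ω, (∫ s in (0:ℝ)..(min (τ ω) T), (f (X s ω) - d)) ∂P ≤ γ)
    (σ : Ω → ℝ) (hσ : IsStoppingTime 𝓕 (fun ω => (σ ω : WithTop ℝ))) (hσ0 : ∀ ω, 0 ≤ σ ω)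
    (hσint : Integrable σ P)
    (ε : ℝ) (hε : 0 ≤ ε)
    (hval : -Cg - ε ≤ ∫ ω, ((∫ s in (0:ℝ)..(σ ω), f (X s ω)) + g (X (σ ω) ω)) ∂P) :
    ∫ ω, σ ω ∂P ≤ (γ + 2 * Cg + ε) / (-d) := by
  have hXm : Measurable (Function.uncurry X) :=
    measurable_uncurry_of_isProgressive (IsStronglyProgressive.isProgressive hX)
  have hr : IntegrableOn (Function.uncurry fun ω t => f (X t ω)) (regionBetween 0 σ univ)
      (P.prod volume) :=
    (integrableOn_regionBetween_const hσint Cf).mono'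
      (hf.comp (hXm.comp measurable_swap)).aestronglyMeasurable (.of_forall fun p => hfb _)
  have hG : Integrable (fun ω => g (X (σ ω) ω)) P :=
    .of_bound ((hg.comp hXm).comp_aemeasurable
      (hσint.aemeasurable.prodMk aemeasurable_id)).aestronglyMeasurable Cg
      (.of_forall fun ω => hgb _)
  exact stmt1_general hσint (.of_forall hσ0) hr hG (.of_forall fun ω => le_of_abs_le (hgb _)) hd
    (hγ σ hσ hσ0) hval
end

section
/- Let (X_n)_{n∈ℕ} be a sequence of nonnegative random variables on a probability space with E[X_n] ≤ 1 for every n, and let Y be a nonnegative random variable (with possibly infinite expectation). If lim_{n→∞} P(Y > X_n) = 0, then E[Y] ≤ 1. -/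
/-!
For a bounded minorant `φ ≤ C` of `Y`, replacing `φ` by `X n` costs nothing where `φ ≤ X n` and at
most `C` elsewhere, so `E[φ] ≤ E[X n] + C * P(Y > X n)`, and the last term vanishes in the limit.
The expectation of `Y` is the supremum of those of its finite-valued simple minorants, which are
bounded.
-/

open MeasureTheory Filter Set
open scoped ENNReal Topology

section Fatou

variable {α ι : Type*} [MeasurableSpace α] {μ : Measure α}

lemma lintegral_le_lintegral_add_mul_measure_lt {f g : α → ℝ≥0∞} {C : ℝ≥0∞}
    (hfC : ∀ x, f x ≤ C) :
    ∫⁻ x, f x ∂μ ≤ ∫⁻ x, g x ∂μ + C * μ {x | g x < f x} := by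
  let A := toMeasurable μ {x | g x < f x}
  have hA : MeasurableSet A := measurableSet_toMeasurable _ _
  have le_on_compl : ∀ x ∈ Aᶜ, f x ≤ g x := fun x hx ↦
    not_lt.mp fun hlt ↦ hx (subset_toMeasurable μ _ hlt)
  calc ∫⁻ x, f x ∂μ = ∫⁻ x in Aᶜ, f x ∂μ + ∫⁻ x in A, f x ∂μ := by
        rw [add_comm, lintegral_add_compl f hA]
    _ ≤ ∫⁻ x in Aᶜ, g x ∂μ + ∫⁻ _ in A, C ∂μ :=
        add_le_add (setLIntegral_mono' hA.compl le_on_compl) (lintegral_mono hfC)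
    _ = ∫⁻ x in Aᶜ, g x ∂μ + C * μ {x | g x < f x} := by
        rw [setLIntegral_const, measure_toMeasurable]
    _ ≤ ∫⁻ x, g x ∂μ + C * μ {x | g x < f x} := by
        gcongr
        exact Measure.restrict_le_self

lemma lintegral_le_liminf_of_le_of_tendsto_measure_lt {l : Filter ι} {X : ι → α → ℝ≥0∞}
    {f : α → ℝ≥0∞} {C : ℝ≥0∞} (hC : C ≠ ∞) (hfC : ∀ x, f x ≤ C)
    (hlim : Tendsto (fun i ↦ μ {x | X i x < f x}) l (𝓝 0)) :
    ∫⁻ x, f x ∂μ ≤ liminf (fun i ↦ ∫⁻ x, X i x ∂μ) l := by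
  have error_tendsto_zero : Tendsto (fun i ↦ C * μ {x | X i x < f x}) l (𝓝 0) := by
    simpa only [mul_zero] using ENNReal.Tendsto.const_mul hlim (.inr hC)
  rw [← ENNReal.liminf_add_of_right_tendsto_zero error_tendsto_zero]
  exact le_liminf_of_le (h := .of_forall fun _ ↦ lintegral_le_lintegral_add_mul_measure_lt hfC)

theorem stmt4_general {l : Filter ι} {X : ι → α → ℝ≥0∞} {Y : α → ℝ≥0∞}
    (hlim : Tendsto (fun i ↦ μ {x | X i x < Y x}) l (𝓝 0)) :
    ∫⁻ x, Y x ∂μ ≤ liminf (fun i ↦ ∫⁻ x, X i x ∂μ) l := by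
  rw [lintegral_eq_nnreal]
  refine iSup₂_le fun φ hφY ↦ ?_
  obtain ⟨C, hφC⟩ := φ.exists_forall_le
  have hlim_φ : Tendsto (fun i ↦ μ {x | X i x < φ x}) l (𝓝 0) :=
    tendsto_of_tendsto_of_tendsto_of_le_of_le tendsto_const_nhds hlim (fun _ ↦ zero_le)
      fun i ↦ measure_mono fun x (hx : X i x < φ x) ↦ hx.trans_le (hφY x)
  rw [← SimpleFunc.lintegral_eq_lintegral]
  exact lintegral_le_liminf_of_le_of_tendsto_measure_lt ENNReal.coe_ne_top
    (fun x ↦ ENNReal.coe_le_coe.mpr (hφC x)) hlim_φ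

end Fatou

/-- If `(X_n)` are nonnegative random variables with `E[X_n] ≤ 1`, `Y ≥ 0`
(possibly with infinite expectation) and `P(Y > X_n) → 0`, then `E[Y] ≤ 1`. -/
theorem stmt4
    {Ω : Type*} [MeasurableSpace Ω] (P : Measure Ω) [IsProbabilityMeasure P]
    (X : ℕ → Ω → ℝ≥0∞) (hX : ∀ n, Measurable (X n))
    (Y : Ω → ℝ≥0∞) (hY : Measurable Y)
    (hXE : ∀ n, ∫⁻ ω, X n ω ∂P ≤ 1)
    (hlim : Filter.Tendsto (fun n => P {ω | X n ω < Y ω}) Filter.atTop (𝓝 0)) :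
    ∫⁻ ω, Y ω ∂P ≤ 1 :=
  (stmt4_general hlim).trans (liminf_le_of_frequently_le' (.of_forall hXE))
end

section
/- Assume f, g : E → ℝ are bounded and continuous, X has right-continuous paths and is quasi-left-continuous (for every nondecreasing sequence of stopping times τ_n with a.s. finite limit τ, X_{τ_n} → X_τ a.s.). Let w : E → ℝ be lower semicontinuous with w ≥ g pointwise. For a stopping time τ set V(τ) := limsup_{T→∞} E[∫₀^{τ∧T} f(X_s) ds + g(X_{τ∧T})], and let w₀ := sup_τ V(τ), the supremum over all stopping times. Assume: (i) Z_t := ∫₀^t f(X_s) ds + w(X_t) consists of integrable random variables, is adapted, satisfies the optional-sampling supermartingale property, and Z_0 = w₀ a.s.; (ii) there exist d < 0 and γ ∈ ℝ such that E[∫₀^{τ∧T} (f(X_s) − d) ds] ≤ γ for every stopping time τ and every T ≥ 0; (iii) there exists a nondecreasing sequence (σ_m) of bounded stopping times with V(σ_m) ≥ w₀ − 1/m for every m ≥ 1; (iv) for every ε ≥ 0 the random time τ_ε := inf{t ≥ 0 : g(X_t) ≥ w(X_t) − ε} is a stopping time, and write τ* := τ_0. Then τ* is a.s. finite, E[τ*]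 ≤ (γ + 2‖g‖ + 1)/(−d), and τ* is optimal: E[∫₀^{τ*} f(X_s) ds + g(X_{τ*})] = w₀. -/
open MeasureTheory Filter Set
open scoped ENNReal Topology Classical

/-- The expected payoff `E[∫₀^{τ∧T} f(X_s) ds + g(X_{τ∧T})]` of stopping at the
(possibly infinite) stopping time `τ` truncated at horizon `T`. -/
noncomputable def truncPayoff {Ω E : Type*} [MeasurableSpace Ω]
    (P : Measure Ω) (X : ℝ → Ω → E) (f g : E → ℝ) (τ : Ω → ℝ≥0∞) (T : ℝ) : ℝ :=
  ∫ ω, ((∫ s in (0:ℝ)..((min (τ ω) (ENNReal.ofReal T)).toReal), f (X s ω))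
      + g (X ((min (τ ω) (ENNReal.ofReal T)).toReal) ω)) ∂P

/-- The value `V(τ) = limsup_{T→∞} E[∫₀^{τ∧T} f(X_s) ds + g(X_{τ∧T})]`. -/
noncomputable def stopValue {Ω E : Type*} [MeasurableSpace Ω]
    (P : Measure Ω) (X : ℝ → Ω → E) (f g : E → ℝ) (τ : Ω → ℝ≥0∞) : ℝ :=
  Filter.limsup (fun T : ℝ => truncPayoff P X f g τ T) Filter.atTop

/-- The hitting time `τ_ε = inf {t ≥ 0 : g(X_t) ≥ w(X_t) − ε}`, with value `∞` if no such
time exists. -/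
noncomputable def hitTime {Ω E : Type*} (X : ℝ → Ω → E) (g w : E → ℝ) (ε : ℝ)
    (ω : Ω) : ℝ≥0∞ :=
  sInf (ENNReal.ofReal '' {t : ℝ | 0 ≤ t ∧ w (X t ω) - ε ≤ g (X t ω)})

/-!
Since `w ≥ g` and `Z` is a supermartingale, a bounded stopping time `σ` has payoff at most
`E[w(X₀)]`, and its deficit is at least the expected gap `E[(w - g)(X_σ)]`. The drift condition
(ii) turns near-optimality into a bound on `E[σ]`, so the maximizing sequence `σ_m` increases to
an integrable limit `S`. By quasi-left-continuity and Fatou's lemma the gap vanishes at `X_S`,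
whence `τ* ≤ S`. As the gap also vanishes at `X_{τ*}`, the supermartingale property shows that
`τ* ∧ σ_m` pays at least as much as `σ_m`. The payoffs of `τ* ∧ σ_m` are thus squeezed towards
`E[w(X₀)]`, and they converge to the payoff of `τ*`.
-/

section Fatou

variable {Ω : Type*} {m0 : MeasurableSpace Ω} {μ : Measure Ω} {Y : Ω → ℝ} {Yn : ℕ → Ω → ℝ}

lemma lintegral_ofReal_le_liminf (hYn : ∀ n, AEMeasurable (Yn n) μ)
    (hlim : ∀ᵐ ω ∂μ, ∀ a < Y ω, ∀ᶠ n in atTop, a < Yn n ω) :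
    ∫⁻ ω, ENNReal.ofReal (Y ω) ∂μ ≤
      liminf (fun n => ∫⁻ ω, ENNReal.ofReal (Yn n ω) ∂μ) atTop := by
  refine (lintegral_mono_ae ?_).trans (lintegral_liminf_le' fun n => (hYn n).ennreal_ofReal)
  filter_upwards [hlim] with ω hω
  refine le_of_forall_lt fun c hc => ?_
  obtain ⟨a, hca, haY⟩ :=
    exists_between ((ENNReal.lt_ofReal_iff_toReal_lt (ne_top_of_lt hc)).1 hc)
  refine ((ENNReal.lt_ofReal_iff_toReal_lt (ne_top_of_lt hc)).2 hca).trans_le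
    (le_liminf_of_le (by isBoundedDefault) ?_)
  filter_upwards [hω a haY] with n hn using ENNReal.ofReal_le_ofReal hn.le

lemma integrable_of_forall_integral_le [IsFiniteMeasure μ] {K c : ℝ} (hY : AEMeasurable Y μ)
    (hK : ∀ ω, K ≤ Y ω) (hKn : ∀ n ω, K ≤ Yn n ω) (hYn : ∀ n, Integrable (Yn n) μ)
    (hc : ∀ n, ∫ ω, Yn n ω ∂μ ≤ c)
    (hlim : ∀ᵐ ω ∂μ, ∀ a < Y ω, ∀ᶠ n in atTop, a < Yn n ω) :
    Integrable Y μ := by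
  have hsub : ∀ n, Integrable (fun ω => Yn n ω - K) μ := fun n =>
    (hYn n).sub (integrable_const K)
  have hshift : ∫⁻ ω, ENNReal.ofReal (Y ω - K) ∂μ ≤ ENNReal.ofReal (c - ∫ _, K ∂μ) := by
    refine (lintegral_ofReal_le_liminf (Yn := fun n ω => Yn n ω - K)
      (fun n => (hsub n).aemeasurable) ?_).trans
      (liminf_le_of_frequently_le' (.of_forall fun n => ?_))
    · filter_upwards [hlim] with ω hω a ha
      filter_upwards [hω (a + K) (by linarith)] with n hn
      linarith
    · rw [← ofReal_integral_eq_lintegral_ofReal (hsub n)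
        (ae_of_all _ fun ω => sub_nonneg.2 (hKn n ω)),
        integral_sub (hYn n) (integrable_const K)]
      exact ENNReal.ofReal_le_ofReal (sub_le_sub_right (hc n) _)
  have hint : Integrable (fun ω => Y ω - K) μ := by
    refine ⟨(hY.sub_const K).aestronglyMeasurable, ?_⟩
    rw [hasFiniteIntegral_iff_ofReal (ae_of_all _ fun ω => sub_nonneg.2 (hK ω))]
    exact hshift.trans_lt ENNReal.ofReal_lt_top
  exact (hint.add (integrable_const K)).congr (ae_of_all _ fun ω => sub_add_cancel _ _)

lemma ae_nonpos_of_tendsto_integral_zero (hY : AEMeasurable Y μ)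
    (hYn : ∀ n, Integrable (Yn n) μ) (hnonneg : ∀ n ω, 0 ≤ Yn n ω)
    (hzero : Tendsto (fun n => ∫ ω, Yn n ω ∂μ) atTop (𝓝 0))
    (hlim : ∀ᵐ ω ∂μ, ∀ a < Y ω, ∀ᶠ n in atTop, a < Yn n ω) :
    ∀ᵐ ω ∂μ, Y ω ≤ 0 := by
  have hlintegral : ∫⁻ ω, ENNReal.ofReal (Y ω) ∂μ = 0 := by
    refine le_antisymm ((lintegral_ofReal_le_liminf
      (fun n => (hYn n).aemeasurable) hlim).trans_eq ?_) zero_le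
    simp_rw [← ofReal_integral_eq_lintegral_ofReal (hYn _) (ae_of_all _ (hnonneg _))]
    simpa using (ENNReal.tendsto_ofReal hzero).liminf_eq
  filter_upwards [(lintegral_eq_zero_iff' hY.ennreal_ofReal).1 hlintegral] with ω hω
  exact ENNReal.ofReal_eq_zero.1 hω

lemma exists_integrable_tendsto_of_monotone {B : ℝ} (hYn : ∀ n, Integrable (Yn n) μ)
    (hnonneg : ∀ n ω, 0 ≤ Yn n ω) (hmono : ∀ ω, Monotone fun n => Yn n ω)
    (hB : ∀ n, ∫ ω, Yn n ω ∂μ ≤ B) :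
    ∃ S : Ω → ℝ, Integrable S μ ∧ ∀ᵐ ω ∂μ, Tendsto (fun n => Yn n ω) atTop (𝓝 (S ω)) := by
  have hmeas : ∀ n, AEMeasurable (fun ω => ENNReal.ofReal (Yn n ω)) μ := fun n =>
    (hYn n).aemeasurable.ennreal_ofReal
  have hmono' : ∀ ω, Monotone fun n => ENNReal.ofReal (Yn n ω) := fun ω _ _ hij =>
    ENNReal.ofReal_le_ofReal (hmono ω hij)
  have hsup : ∫⁻ ω, ⨆ n, ENNReal.ofReal (Yn n ω) ∂μ ≠ ⊤ := by
    rw [lintegral_iSup' hmeas (ae_of_all _ hmono')]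
    refine ne_top_of_le_ne_top ENNReal.ofReal_ne_top (iSup_le fun n => ?_) (b := .ofReal B)
    rw [← ofReal_integral_eq_lintegral_ofReal (hYn n) (ae_of_all _ (hnonneg n))]
    exact ENNReal.ofReal_le_ofReal (hB n)
  refine ⟨fun ω => (⨆ n, ENNReal.ofReal (Yn n ω)).toReal,
    integrable_toReal_of_lintegral_ne_top (.iSup hmeas) hsup, ?_⟩
  filter_upwards [ae_lt_top' (.iSup hmeas) hsup] with ω hω
  refine ((ENNReal.tendsto_toReal hω.ne).comp (tendsto_atTop_iSup (hmono' ω))).congr fun n => ?_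
  exact ENNReal.toReal_ofReal (hnonneg n ω)

lemma exists_integrable_tendsto_integral_le_of_monotone {b : ℕ → ℝ} {c : ℝ}
    (hYn : ∀ n, Integrable (Yn n) μ) (hnonneg : ∀ n ω, 0 ≤ Yn n ω)
    (hmono : ∀ ω, Monotone fun n => Yn n ω) (hle : ∀ n, ∫ ω, Yn n ω ∂μ ≤ b n)
    (hb : Tendsto b atTop (𝓝 c)) :
    ∃ S : Ω → ℝ, Integrable S μ ∧ ∫ ω, S ω ∂μ ≤ c ∧
      ∀ᵐ ω ∂μ, Tendsto (fun n => Yn n ω) atTop (𝓝 (S ω)) := by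
  obtain ⟨B, hB⟩ := hb.bddAbove_range
  obtain ⟨S, hS, hlim⟩ := exists_integrable_tendsto_of_monotone hYn hnonneg hmono
    fun n => (hle n).trans (hB (mem_range_self n))
  exact ⟨S, hS, le_of_tendsto_of_tendsto'
    (integral_tendsto_of_tendsto_of_monotone hYn hS (ae_of_all _ hmono) hlim) hb hle, hlim⟩

end Fatou

lemma integral_le_of_condExp_le {Ω : Type*} {m m0 : MeasurableSpace Ω} {μ : Measure Ω}
    {Y Z : Ω → ℝ} (hm : m ≤ m0) [SigmaFinite (μ.trim hm)] (hZ : Integrable Z μ)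
    (h : μ[Y | m] ≤ᵐ[μ] Z) : ∫ ω, Y ω ∂μ ≤ ∫ ω, Z ω ∂μ := by
  rw [← integral_condExp hm]
  exact integral_mono_ae integrable_condExp hZ h

section JointMeasurability

variable {Ω : Type*} {m0 : MeasurableSpace Ω} {P : Measure Ω}

lemma measurable_uncurry_of_isStronglyProgressive {ι E : Type*} [LinearOrder ι] [Nonempty ι]
    [(atTop : Filter ι).IsCountablyGenerated] [TopologicalSpace ι] [OrderClosedTopology ι]
    [SecondCountableTopology ι] [MeasurableSpace ι] [BorelSpace ι]
    [TopologicalSpace E] [TopologicalSpace.PseudoMetrizableSpace E] [MeasurableSpace E]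
    [BorelSpace E] {𝓕 : Filtration ι m0} {X : ι → Ω → E} (hX : IsStronglyProgressive 𝓕 X) :
    Measurable (Function.uncurry X) := by
  obtain ⟨u, hu⟩ := exists_seq_tendsto (atTop : Filter ι)
  have hstopped : ∀ n, Measurable fun p : ι × Ω => X (min p.1 (u n)) p.2 := fun n => by
    have hle : (Subtype.instMeasurableSpace.prod (𝓕 (u n)) : MeasurableSpace (Iic (u n) × Ω)) ≤
        Subtype.instMeasurableSpace.prod m0 :=
      sup_le_sup le_rfl (MeasurableSpace.comap_mono (𝓕.le _))
    exact ((hX (u n)).measurable.mono hle le_rfl).comp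
      (((measurable_fst.min measurable_const).subtype_mk
        (h := fun p => min_le_right p.1 (u n))).prodMk measurable_snd)
  refine measurable_of_tendsto_metrizable hstopped (tendsto_pi_nhds.2 fun p => ?_)
  refine tendsto_const_nhds.congr' ?_
  filter_upwards [hu.eventually_ge_atTop p.1] with n hn
  rw [min_eq_left hn, Function.uncurry]

lemma integrable_apply_of_mem_finset {ι : Type*} [MeasurableSpace ι] {Z : ι → Ω → ℝ}
    (hZ : Measurable (Function.uncurry Z)) {σ : Ω → ι} (hσ : Measurable σ) {s : Finset ι}
    (hs : ∀ ω, σ ω ∈ s) (hint : ∀ t ∈ s, Integrable (Z t) P) :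
    Integrable (fun ω => Z (σ ω) ω) P := by
  refine (integrable_finsetSum s fun t ht => (hint t ht).abs).mono'
    (hZ.comp (hσ.prodMk measurable_id)).aestronglyMeasurable (ae_of_all _ fun ω => ?_)
  exact Finset.single_le_sum (f := fun t => |Z t ω|) (fun _ _ => abs_nonneg _) (hs ω)

end JointMeasurability

section TimeIntegral

variable {Ω : Type*} {m0 : MeasurableSpace Ω} {P : Measure Ω} {F : ℝ → Ω → ℝ} {C : ℝ}

lemma intervalIntegrable_path (hF : Measurable (Function.uncurry F)) (hC : ∀ s ω, |F s ω| ≤ C)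
    (ω : Ω) (a b : ℝ) : IntervalIntegrable (fun s => F s ω) volume a b :=
  (intervalIntegrable_const (c := C)).mono_fun
    (hF.comp measurable_prodMk_right).aestronglyMeasurable
    (ae_of_all _ fun s => (hC s ω).trans (le_abs_self C))

lemma abs_intervalIntegral_path_le (hC : ∀ s ω, |F s ω| ≤ C) (t : ℝ) (ω : Ω) :
    |∫ s in (0 : ℝ)..t, F s ω| ≤ C * |t| := by
  have h := intervalIntegral.norm_integral_le_of_norm_le_const (f := fun s => F s ω) (a := 0)
    (b := t) (C := C) fun s _ => hC s ω
  rwa [sub_zero, Real.norm_eq_abs] at h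

lemma continuous_intervalIntegral_path (hF : Measurable (Function.uncurry F))
    (hC : ∀ s ω, |F s ω| ≤ C) (ω : Ω) : Continuous fun t => ∫ s in (0 : ℝ)..t, F s ω :=
  intervalIntegral.continuous_primitive (intervalIntegrable_path hF hC ω) 0

lemma measurable_uncurry_intervalIntegral_path (hF : Measurable (Function.uncurry F))
    (hC : ∀ s ω, |F s ω| ≤ C) :
    Measurable (Function.uncurry fun t ω => ∫ s in (0 : ℝ)..t, F s ω) := by
  refine measurable_uncurry_of_continuous_of_measurable
    (continuous_intervalIntegral_path hF hC) fun t => ?_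
  have hset : ∀ A : Set ℝ, Measurable fun ω => ∫ s in A, F s ω := fun A =>
    (hF.comp measurable_swap).stronglyMeasurable.integral_prod_right'.measurable
  exact (hset _).sub (hset _)

lemma integrable_intervalIntegral_path (hF : Measurable (Function.uncurry F))
    (hC : ∀ s ω, |F s ω| ≤ C) {σ : Ω → ℝ} (hσ : Measurable σ) (hσi : Integrable σ P) :
    Integrable (fun ω => ∫ s in (0 : ℝ)..σ ω, F s ω) P :=
  (hσi.abs.const_mul C).mono'
    ((measurable_uncurry_intervalIntegral_path hF hC).comp
      (hσ.prodMk measurable_id)).aestronglyMeasurable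
    (ae_of_all _ fun ω => abs_intervalIntegral_path_le hC (σ ω) ω)

lemma tendsto_integral_intervalIntegral_path (hF : Measurable (Function.uncurry F))
    (hC : ∀ s ω, |F s ω| ≤ C) {ρ : ℕ → Ω → ℝ} {R S : Ω → ℝ} (hρ : ∀ n, Measurable (ρ n))
    (hS : Integrable S P) (hρS : ∀ n, ∀ᵐ ω ∂P, |ρ n ω| ≤ S ω)
    (hlim : ∀ᵐ ω ∂P, Tendsto (fun n => ρ n ω) atTop (𝓝 (R ω))) :
    Tendsto (fun n => ∫ ω, (∫ s in (0 : ℝ)..ρ n ω, F s ω) ∂P) atTop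
      (𝓝 (∫ ω, (∫ s in (0 : ℝ)..R ω, F s ω) ∂P)) := by
  refine tendsto_integral_of_dominated_convergence (fun ω => |C| * S ω) (fun n => ?_)
    (hS.const_mul _) (fun n => ?_) ?_
  · exact ((measurable_uncurry_intervalIntegral_path hF hC).comp
      ((hρ n).prodMk measurable_id)).aestronglyMeasurable
  · filter_upwards [hρS n] with ω hω
    calc |∫ s in (0 : ℝ)..ρ n ω, F s ω| ≤ C * |ρ n ω| := abs_intervalIntegral_path_le hC _ ω
      _ ≤ |C| * S ω := by gcongr; exact le_abs_self C
  · filter_upwards [hlim] with ω hω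
    exact ((continuous_intervalIntegral_path hF hC ω).tendsto _).comp hω

end TimeIntegral

section StoppingTime

/-- The smallest point of the grid `ℤ / N` that is at least `t`; rounding a stopping time up to a
grid makes it finitely valued on bounded time intervals. -/
noncomputable def gridCeil (N t : ℝ) : ℝ := ⌈N * t⌉ / N

lemma le_gridCeil {N : ℝ} (hN : 0 < N) (t : ℝ) : t ≤ gridCeil N t := by
  rw [gridCeil, le_div_iff₀' hN]
  exact Int.le_ceil _

lemma gridCeil_le_add {N : ℝ} (hN : 0 < N) (t : ℝ) : gridCeil N t ≤ t + 1 / N := by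
  rw [gridCeil, div_le_iff₀' hN, mul_add, mul_one_div_cancel hN.ne']
  exact (Int.ceil_lt_add_one _).le

lemma gridCeil_le_iff {N : ℝ} (hN : 0 < N) {s t : ℝ} : gridCeil N s ≤ t ↔ s ≤ ⌊N * t⌋ / N := by
  rw [gridCeil, div_le_iff₀' hN, le_div_iff₀' hN, ← Int.le_floor, Int.ceil_le]

lemma gridCeil_mem_image {N : ℝ} (hN : 0 ≤ N) {t T : ℝ} (ht : 0 ≤ t) (htT : t ≤ T) :
    gridCeil N t ∈ (Finset.Icc 0 ⌈N * T⌉).image fun k : ℤ => (k : ℝ) / N :=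
  Finset.mem_image_of_mem _ (Finset.mem_Icc.2 ⟨Int.ceil_nonneg (mul_nonneg hN ht),
    Int.ceil_mono (mul_le_mul_of_nonneg_left htT hN)⟩)

lemma tendsto_gridCeil (t : ℝ) :
    Tendsto (fun n : ℕ => gridCeil (n + 1) t) atTop (𝓝[≥] t) := by
  have hpos : ∀ n : ℕ, (0 : ℝ) < n + 1 := fun n => n.cast_add_one_pos
  have hupper : Tendsto (fun n : ℕ => t + 1 / ((n : ℝ) + 1)) atTop (𝓝 t) := by
    simpa using tendsto_const_nhds.add (tendsto_one_div_add_atTop_nhds_zero_nat (𝕜 := ℝ))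
  refine tendsto_nhdsWithin_iff.2 ⟨?_, .of_forall fun n => le_gridCeil (hpos n) t⟩
  exact tendsto_of_tendsto_of_tendsto_of_le_of_le tendsto_const_nhds hupper
    (fun n => le_gridCeil (hpos n) t) (fun n => gridCeil_le_add (hpos n) t)

variable {Ω : Type*} {m0 : MeasurableSpace Ω} {𝓕 : Filtration ℝ m0} {σ : Ω → ℝ}

/-- `σ` is a stopping time with values in some interval `[0, T]`. -/
structure IsBoundedStoppingTime (𝓕 : Filtration ℝ m0) (σ : Ω → ℝ) : Prop where
  isStoppingTime : IsStoppingTime 𝓕 fun ω => (σ ω : WithTop ℝ)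
  nonneg : ∀ ω, 0 ≤ σ ω
  exists_le : ∃ T, ∀ ω, σ ω ≤ T

namespace IsBoundedStoppingTime

lemma const {c : ℝ} (hc : 0 ≤ c) : IsBoundedStoppingTime 𝓕 fun _ => c :=
  ⟨isStoppingTime_const 𝓕 c, fun _ => hc, c, fun _ => le_rfl⟩

lemma measurableSet_le (hσ : IsBoundedStoppingTime 𝓕 σ) (t : ℝ) :
    MeasurableSet[𝓕 t] {ω | σ ω ≤ t} := by
  simpa only [WithTop.coe_le_coe] using hσ.isStoppingTime t

lemma measurable (hσ : IsBoundedStoppingTime 𝓕 σ) : Measurable σ :=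
  measurable_of_Iic fun t => 𝓕.le t _ (hσ.measurableSet_le t)

lemma integrable {P : Measure Ω} [IsFiniteMeasure P] (hσ : IsBoundedStoppingTime 𝓕 σ) :
    Integrable σ P := by
  obtain ⟨T, hT⟩ := hσ.exists_le
  exact .of_bound hσ.measurable.aestronglyMeasurable T
    (ae_of_all _ fun ω => (abs_of_nonneg (hσ.nonneg ω)).trans_le (hT ω))

lemma max_const (hσ : IsBoundedStoppingTime 𝓕 σ) (c : ℝ) :
    IsBoundedStoppingTime 𝓕 fun ω => max (σ ω) c := by
  obtain ⟨T, hT⟩ := hσ.exists_le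
  exact ⟨hσ.isStoppingTime.max_const c, fun ω => le_max_of_le_left (hσ.nonneg ω), max T c,
    fun ω => max_le_max_right c (hT ω)⟩

lemma gridCeil (hσ : IsBoundedStoppingTime 𝓕 σ) {N : ℝ} (hN : 0 < N) :
    IsBoundedStoppingTime 𝓕 fun ω => gridCeil N (σ ω) := by
  obtain ⟨T, hT⟩ := hσ.exists_le
  refine ⟨fun t => ?_, fun ω => (hσ.nonneg ω).trans (le_gridCeil hN _), T + 1 / N,
    fun ω => (gridCeil_le_add hN _).trans (by linarith [hT ω])⟩
  have hgrid : (⌊N * t⌋ : ℝ) / N ≤ t := (div_le_iff₀' hN).2 (Int.floor_le _)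
  simpa only [WithTop.coe_le_coe, gridCeil_le_iff hN] using
    𝓕.mono hgrid _ (hσ.measurableSet_le _)

lemma toReal_min (hσ : IsBoundedStoppingTime 𝓕 σ) {τ : Ω → ℝ≥0∞}
    (hτ : ∀ t : ℝ, MeasurableSet[𝓕 t] {ω | τ ω ≤ ENNReal.ofReal t}) :
    IsBoundedStoppingTime 𝓕 fun ω => (min (τ ω) (ENNReal.ofReal (σ ω))).toReal := by
  have hle : ∀ ω, (min (τ ω) (ENNReal.ofReal (σ ω))).toReal ≤ σ ω := fun ω =>
    ENNReal.toReal_le_of_le_ofReal (hσ.nonneg ω) (min_le_right _ _)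
  refine ⟨fun t => ?_, fun _ => ENNReal.toReal_nonneg, hσ.exists_le.imp fun T hT ω =>
    (hle ω).trans (hT ω)⟩
  rcases lt_or_ge t 0 with ht | ht
  · convert MeasurableSet.empty using 1
    exact eq_empty_of_forall_notMem fun ω hω =>
      (ht.trans_le ENNReal.toReal_nonneg).not_ge (WithTop.coe_le_coe.1 hω)
  · convert (hτ t).union (hσ.measurableSet_le t) using 1
    ext ω
    simp only [Set.mem_ofPred_eq, WithTop.coe_le_coe, Set.mem_union]
    rw [← ENNReal.le_ofReal_iff_toReal_le (min_lt_of_right_lt ENNReal.ofReal_lt_top).ne ht,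
      min_le_iff, ENNReal.ofReal_le_ofReal_iff ht]

lemma measurableSet_ofReal_le (hσ : IsBoundedStoppingTime 𝓕 σ) (hpos : ∀ ω, 0 < σ ω) (t : ℝ) :
    MeasurableSet[𝓕 t] {ω | ENNReal.ofReal (σ ω) ≤ ENNReal.ofReal t} := by
  simpa only [ENNReal.ofReal_le_ofReal_iff', (hpos _).not_ge, or_false] using
    hσ.measurableSet_le t

end IsBoundedStoppingTime

lemma measurable_of_measurableSet_le_ofReal {τ : Ω → ℝ≥0∞}
    (hτ : ∀ t : ℝ, MeasurableSet[𝓕 t] {ω | τ ω ≤ ENNReal.ofReal t}) : Measurable τ := by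
  refine measurable_of_Iic fun a => ?_
  by_cases ha : a = ⊤
  · simp [ha]
  · rw [← ENNReal.ofReal_toReal ha]
    exact 𝓕.le _ _ (hτ a.toReal)

end StoppingTime

section Supermartingale

variable {Ω : Type*} {m0 : MeasurableSpace Ω} {P : Measure Ω} {𝓕 : Filtration ℝ m0}
  {Z : ℝ → Ω → ℝ}

/-- The optional-sampling supermartingale property of a process with integrable marginals.
Adaptedness is not part of the definition. -/
structure IsOptionalSupermartingale (Z : ℝ → Ω → ℝ) (𝓕 : Filtration ℝ m0) (P : Measure Ω) :
    Prop where
  integrable : ∀ t, 0 ≤ t → Integrable (Z t) P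
  condExp_le : ∀ (σ₁ σ₂ : Ω → ℝ) (h₁ : IsBoundedStoppingTime 𝓕 σ₁),
    IsBoundedStoppingTime 𝓕 σ₂ → (∀ ω, σ₁ ω ≤ σ₂ ω) →
    P[fun ω => Z (σ₂ ω) ω | h₁.isStoppingTime.measurableSpace] ≤ᵐ[P] fun ω => Z (σ₁ ω) ω

namespace IsOptionalSupermartingale

variable [IsFiniteMeasure P] {σ₁ σ₂ σ : Ω → ℝ}

lemma integral_le (hZ : IsOptionalSupermartingale Z 𝓕 P) (h₁ : IsBoundedStoppingTime 𝓕 σ₁)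
    (h₂ : IsBoundedStoppingTime 𝓕 σ₂) (hle : ∀ ω, σ₁ ω ≤ σ₂ ω)
    (hint : Integrable (fun ω => Z (σ₁ ω) ω) P) :
    ∫ ω, Z (σ₂ ω) ω ∂P ≤ ∫ ω, Z (σ₁ ω) ω ∂P :=
  integral_le_of_condExp_le h₁.isStoppingTime.measurableSpace_le hint
    (hZ.condExp_le σ₁ σ₂ h₁ h₂ hle)

lemma integral_le_initial (hZ : IsOptionalSupermartingale Z 𝓕 P)
    (hσ : IsBoundedStoppingTime 𝓕 σ) : ∫ ω, Z (σ ω) ω ∂P ≤ ∫ ω, Z 0 ω ∂P :=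
  hZ.integral_le (.const le_rfl) hσ hσ.nonneg (hZ.integrable 0 le_rfl)

lemma integral_gap_le (hZ : IsOptionalSupermartingale Z 𝓕 P) (hσ : IsBoundedStoppingTime 𝓕 σ)
    (hZσ : Integrable (fun ω => Z (σ ω) ω) P) {Y : Ω → ℝ} (hY : Integrable Y P) {ε : ℝ}
    (hε : ∫ ω, Z 0 ω ∂P - ε ≤ ∫ ω, Y ω ∂P) : ∫ ω, (Z (σ ω) ω - Y ω) ∂P ≤ ε := by
  rw [integral_sub hZσ hY]
  linarith [hZ.integral_le_initial hσ]

lemma integral_le_of_gap_le (hZ : IsOptionalSupermartingale Z 𝓕 P)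
    (h₁ : IsBoundedStoppingTime 𝓕 σ₁) (h₂ : IsBoundedStoppingTime 𝓕 σ₂)
    (hle : ∀ ω, σ₁ ω ≤ σ₂ ω) (hZ₁ : Integrable (fun ω => Z (σ₁ ω) ω) P)
    (hZ₂ : Integrable (fun ω => Z (σ₂ ω) ω) P) {Y₁ Y₂ : Ω → ℝ} (hY₁ : Integrable Y₁ P)
    (hY₂ : Integrable Y₂ P) (hgap : ∀ ω, Z (σ₁ ω) ω - Y₁ ω ≤ Z (σ₂ ω) ω - Y₂ ω) :
    ∫ ω, Y₂ ω ∂P ≤ ∫ ω, Y₁ ω ∂P := by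
  have h := integral_mono (hZ₁.sub hY₁) (hZ₂.sub hY₂) hgap
  simp only [Pi.sub_apply] at h
  rw [integral_sub hZ₁ hY₁, integral_sub hZ₂ hY₂] at h
  linarith [hZ.integral_le h₁ h₂ hle hZ₁]

-- Fatou's lemma along the finitely valued approximations `gridCeil (n + 1) (σ ω)`, whose
-- expectations are at most that of `Z 0`.
lemma integrable_stopped (hZ : IsOptionalSupermartingale Z 𝓕 P)
    (hmeas : Measurable (Function.uncurry Z))
    (hlsc : ∀ ω t, 0 ≤ t → LowerSemicontinuousWithinAt (fun s => Z s ω) (Ici t) t)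
    (hbdd : ∀ T, ∃ K, ∀ t ∈ Icc 0 T, ∀ ω, K ≤ Z t ω) (hσ : IsBoundedStoppingTime 𝓕 σ) :
    Integrable (fun ω => Z (σ ω) ω) P := by
  obtain ⟨T, hT⟩ := hσ.exists_le
  obtain ⟨K, hK⟩ := hbdd (T + 1)
  have hpos : ∀ n : ℕ, (0 : ℝ) < n + 1 := fun n => n.cast_add_one_pos
  have hgrid : ∀ n : ℕ, IsBoundedStoppingTime 𝓕 fun ω => gridCeil (n + 1) (σ ω) := fun n =>
    hσ.gridCeil (hpos n)
  have hgridT : ∀ (n : ℕ) ω, gridCeil (n + 1) (σ ω) ≤ T + 1 := fun n ω =>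
    (gridCeil_le_add (hpos n) _).trans
      (add_le_add (hT ω) ((div_le_one (hpos n)).2 (by simp)))
  refine integrable_of_forall_integral_le
    (hmeas.comp (hσ.measurable.prodMk measurable_id)).aemeasurable
    (Yn := fun n ω => Z (gridCeil (n + 1) (σ ω)) ω)
    (fun ω => hK _ ⟨hσ.nonneg ω, (hT ω).trans (by simp)⟩ ω)
    (fun n ω => hK _ ⟨(hgrid n).nonneg ω, hgridT n ω⟩ ω) (fun n => ?_)
    (fun n => hZ.integral_le_initial (hgrid n)) (ae_of_all _ fun ω a ha => ?_)
  · refine integrable_apply_of_mem_finset hmeas (hgrid n).measurable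
      (fun ω => gridCeil_mem_image (hpos n).le (hσ.nonneg ω) (hT ω)) fun t ht => ?_
    obtain ⟨k, hk, rfl⟩ := Finset.mem_image.1 ht
    exact hZ.integrable _ (div_nonneg (Int.cast_nonneg (Finset.mem_Icc.1 hk).1) (hpos n).le)
  · exact (tendsto_gridCeil (σ ω)).eventually (hlsc ω _ (hσ.nonneg ω) a ha)

end IsOptionalSupermartingale

end Supermartingale

section Payoff

variable {Ω : Type*} {m0 : MeasurableSpace Ω} {P : Measure Ω} {E : Type*} {X : ℝ → Ω → E}
  {f g h : E → ℝ} {C Cg : ℝ}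

/-- The running reward `f` up to time `t` plus the terminal reward `h`. For `h = g` it is the
payoff of stopping at `t`, for `h = w` the process `Z` of the verification argument. -/
noncomputable def payoff (X : ℝ → Ω → E) (f h : E → ℝ) (t : ℝ) (ω : Ω) : ℝ :=
  (∫ s in (0 : ℝ)..t, f (X s ω)) + h (X t ω)

lemma payoff_zero (X : ℝ → Ω → E) (f h : E → ℝ) (ω : Ω) : payoff X f h 0 ω = h (X 0 ω) := by
  rw [payoff, intervalIntegral.integral_same, zero_add]

lemma payoff_sub_payoff (X : ℝ → Ω → E) (f h k : E → ℝ) (t : ℝ) (ω : Ω) :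
    payoff X f h t ω - payoff X f k t ω = h (X t ω) - k (X t ω) :=
  add_sub_add_left_eq_sub _ _ _

lemma le_payoff (hf : ∀ x, |f x| ≤ C) {K : ℝ} (hh : ∀ x, K ≤ h x) {t T : ℝ}
    (ht : t ∈ Icc 0 T) (ω : Ω) : K - C * T ≤ payoff X f h t ω := by
  have hC : 0 ≤ C := (abs_nonneg _).trans (hf (X 0 ω))
  have htime : -(C * T) ≤ ∫ s in (0 : ℝ)..t, f (X s ω) := calc
    -(C * T) ≤ -(C * |t|) := by rw [abs_of_nonneg ht.1]; gcongr; exact ht.2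
    _ ≤ _ := neg_le_of_abs_le (abs_intervalIntegral_path_le (fun s ω => hf (X s ω)) t ω)
  rw [payoff]
  linarith [hh (X t ω)]

variable [MeasurableSpace E]

lemma measurable_uncurry_payoff (hX : Measurable (Function.uncurry X)) (hfm : Measurable f)
    (hf : ∀ x, |f x| ≤ C) (hh : Measurable h) : Measurable (Function.uncurry (payoff X f h)) :=
  (measurable_uncurry_intervalIntegral_path (F := fun s ω => f (X s ω)) (hfm.comp hX)
    fun _ _ => hf _).add (hh.comp hX)

lemma integrable_comp_process [IsFiniteMeasure P] (hX : Measurable (Function.uncurry X))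
    (hgm : Measurable g) (hg : ∀ x, |g x| ≤ Cg) {σ : Ω → ℝ} (hσ : Measurable σ) :
    Integrable (fun ω => g (X (σ ω) ω)) P :=
  .of_bound (hgm.comp (hX.comp (hσ.prodMk measurable_id))).aestronglyMeasurable Cg
    (ae_of_all _ fun _ => hg _)

lemma integrable_payoff [IsFiniteMeasure P] (hX : Measurable (Function.uncurry X))
    (hfm : Measurable f) (hf : ∀ x, |f x| ≤ C) (hgm : Measurable g) (hg : ∀ x, |g x| ≤ Cg)
    {σ : Ω → ℝ} (hσ : Measurable σ) (hσi : Integrable σ P) :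
    Integrable (fun ω => payoff X f g (σ ω) ω) P :=
  (integrable_intervalIntegral_path (F := fun s ω => f (X s ω)) (hfm.comp hX) (fun _ _ => hf _)
    hσ hσi).add (integrable_comp_process hX hgm hg hσ)

variable [TopologicalSpace E]

lemma lowerSemicontinuousWithinAt_payoff (hX : Measurable (Function.uncurry X))
    (hfm : Measurable f) (hf : ∀ x, |f x| ≤ C) (hh : LowerSemicontinuous h) {s : Set ℝ} {t : ℝ}
    {ω : Ω} (hpath : ContinuousWithinAt (fun s => X s ω) s t) :
    LowerSemicontinuousWithinAt (fun t => payoff X f h t ω) s t := by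
  refine LowerSemicontinuousWithinAt.add ?_ fun a ha => hpath.eventually (hh _ a ha)
  exact (continuous_intervalIntegral_path (F := fun s ω => f (X s ω)) (hfm.comp hX)
    (fun _ _ => hf _) ω).lowerSemicontinuous.lowerSemicontinuousWithinAt _ _

lemma tendsto_integral_payoff [OpensMeasurableSpace E] [IsFiniteMeasure P]
    (hX : Measurable (Function.uncurry X)) (hfm : Measurable f) (hf : ∀ x, |f x| ≤ C)
    (hgc : Continuous g) (hg : ∀ x, |g x| ≤ Cg) {ρ : ℕ → Ω → ℝ} {R S : Ω → ℝ}
    (hρ : ∀ n, Measurable (ρ n)) (hR : Measurable R) (hS : Integrable S P)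
    (hρS : ∀ n, ∀ᵐ ω ∂P, |ρ n ω| ≤ S ω)
    (hlim : ∀ᵐ ω ∂P, Tendsto (fun n => ρ n ω) atTop (𝓝 (R ω)))
    (hXlim : ∀ᵐ ω ∂P, Tendsto (fun n => X (ρ n ω) ω) atTop (𝓝 (X (R ω) ω))) :
    Tendsto (fun n => ∫ ω, payoff X f g (ρ n ω) ω ∂P) atTop
      (𝓝 (∫ ω, payoff X f g (R ω) ω ∂P)) := by
  have hF : Measurable (Function.uncurry fun s ω => f (X s ω)) := hfm.comp hX
  have hFC : ∀ s ω, |f (X s ω)| ≤ C := fun _ _ => hf _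
  have hρi : ∀ n, Integrable (ρ n) P := fun n => hS.mono' (hρ n).aestronglyMeasurable (hρS n)
  have hRi : Integrable R P := hS.mono' hR.aestronglyMeasurable <| by
    filter_upwards [hlim, ae_all_iff.2 hρS] with ω hω hωS
    exact le_of_tendsto hω.abs (.of_forall hωS)
  have hterm : Tendsto (fun n => ∫ ω, g (X (ρ n ω) ω) ∂P) atTop
      (𝓝 (∫ ω, g (X (R ω) ω) ∂P)) :=
    tendsto_integral_of_dominated_convergence (fun _ => Cg)
      (fun n => (integrable_comp_process hX hgc.measurable hg (hρ n)).aestronglyMeasurable)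
      (integrable_const _) (fun _ => ae_of_all _ fun _ => hg _)
      (hXlim.mono fun ω hω => (hgc.tendsto _).comp hω)
  have hsplit : ∀ σ : Ω → ℝ, Measurable σ → Integrable σ P →
      ∫ ω, payoff X f g (σ ω) ω ∂P =
        ∫ ω, (∫ s in (0 : ℝ)..σ ω, f (X s ω)) ∂P + ∫ ω, g (X (σ ω) ω) ∂P := fun σ hσ hσi =>
    integral_add (integrable_intervalIntegral_path hF hFC hσ hσi)
      (integrable_comp_process hX hgc.measurable hg hσ)
  simp_rw [hsplit _ (hρ _) (hρi _), hsplit R hR hRi]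
  exact (tendsto_integral_intervalIntegral_path hF hFC hρ hS hρS hlim).add hterm

end Payoff

section HittingTime

variable {Ω E : Type*} {X : ℝ → Ω → E} {g w : E → ℝ} {ε : ℝ} {ω : Ω}

lemma hitTime_le {t : ℝ} (ht : 0 ≤ t) (h : w (X t ω) - ε ≤ g (X t ω)) :
    hitTime X g w ε ω ≤ ENNReal.ofReal t :=
  sInf_le ⟨t, ⟨ht, h⟩, rfl⟩

lemma sub_le_of_hitTime_lt_top [TopologicalSpace E]
    (hrc : ∀ t, 0 ≤ t → ContinuousWithinAt (fun s => X s ω) (Ici t) t)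
    (hg : Continuous g) (hw : LowerSemicontinuous w) (h : hitTime X g w ε ω < ⊤) :
    w (X (hitTime X g w ε ω).toReal ω) - ε ≤ g (X (hitTime X g w ε ω).toReal ω) := by
  set r := (hitTime X g w ε ω).toReal
  by_contra! hlt
  have hgap : ∀ᶠ s in 𝓝[≥] r, g (X s ω) < w (X s ω) - ε := by
    obtain ⟨c, hgc, hcw⟩ := exists_between hlt
    have hpath := hrc r ENNReal.toReal_nonneg
    filter_upwards [hpath.eventually (hw _ (c + ε) (by linarith)),
      hpath.eventually (hg.continuousAt.eventually_lt_const hgc)] with s hws hgs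
    linarith
  obtain ⟨u, hru, hsub⟩ := mem_nhdsGE_iff_exists_Ico_subset.1 hgap
  have hlt_u : hitTime X g w ε ω < ENNReal.ofReal u :=
    (ENNReal.lt_ofReal_iff_toReal_lt h.ne).2 hru
  obtain ⟨_, ⟨t, ⟨ht0, ht⟩, rfl⟩, htu⟩ := sInf_lt_iff.1 hlt_u
  have hrt : r ≤ t := ENNReal.toReal_le_of_le_ofReal ht0 (hitTime_le ht0 ht)
  have htu' : t < u := (ENNReal.ofReal_lt_ofReal_iff_of_nonneg ht0).1 htu
  exact (hsub ⟨hrt, htu'⟩).not_ge ht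

end HittingTime

section BoundedStopping

variable {Ω : Type*} {m0 : MeasurableSpace Ω} {P : Measure Ω} {𝓕 : Filtration ℝ m0}
  {σ : Ω → ℝ}

lemma stopValue_ofReal {E : Type*} (X : ℝ → Ω → E) (f g : E → ℝ)
    (hσ : IsBoundedStoppingTime 𝓕 σ) :
    stopValue P X f g (fun ω => ENNReal.ofReal (σ ω)) = ∫ ω, payoff X f g (σ ω) ω ∂P := by
  obtain ⟨T, hT⟩ := hσ.exists_le
  refine (tendsto_const_nhds.congr' ?_).limsup_eq
  filter_upwards [eventually_ge_atTop T] with T' hT'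
  refine integral_congr_ae (ae_of_all _ fun ω => ?_)
  simp only [min_eq_left (ENNReal.ofReal_le_ofReal ((hT ω).trans hT')),
    ENNReal.toReal_ofReal (hσ.nonneg ω), payoff]

-- For `t < 0` the set `{ω | ENNReal.ofReal (σ ω) ≤ ENNReal.ofReal t}` is `{ω | σ ω = 0}`, which
-- need not belong to `𝓕 t`; hence the passage to the limit along `max (σ ω) (1 / (n + 1))`.
lemma integral_intervalIntegral_le_of_forall_min [IsFiniteMeasure P] {F : ℝ → Ω → ℝ} {C γ : ℝ}
    (hF : Measurable (Function.uncurry F)) (hC : ∀ s ω, |F s ω| ≤ C)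
    (hγ : ∀ τ : Ω → ℝ≥0∞, (∀ t : ℝ, MeasurableSet[𝓕 t] {ω | τ ω ≤ ENNReal.ofReal t}) →
      ∀ T : ℝ, 0 ≤ T →
      ∫ ω, (∫ s in (0 : ℝ)..(min (τ ω) (ENNReal.ofReal T)).toReal, F s ω) ∂P ≤ γ)
    (hσ : IsBoundedStoppingTime 𝓕 σ) : ∫ ω, (∫ s in (0 : ℝ)..σ ω, F s ω) ∂P ≤ γ := by
  set ρ : ℕ → Ω → ℝ := fun n ω => max (σ ω) (1 / ((n : ℝ) + 1))
  have hρ : ∀ n, IsBoundedStoppingTime 𝓕 (ρ n) := fun n => hσ.max_const _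
  have hpos : ∀ n ω, 0 < ρ n ω := fun n ω => lt_max_of_lt_right n.one_div_pos_of_nat
  have hbound : ∀ n ω, |ρ n ω| ≤ σ ω + 1 := fun n ω => by
    have hinv : 1 / ((n : ℝ) + 1) ≤ 1 := (div_le_one n.cast_add_one_pos).2 (by simp)
    rw [abs_of_pos (hpos n ω)]
    exact max_le (by linarith) (by linarith [hσ.nonneg ω])
  have hlim : ∀ ω, Tendsto (fun n => ρ n ω) atTop (𝓝 (σ ω)) := fun ω => by
    simpa [ρ, hσ.nonneg ω] using
      (tendsto_const_nhds (x := σ ω)).max (tendsto_one_div_add_atTop_nhds_zero_nat (𝕜 := ℝ))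
  refine le_of_tendsto' (tendsto_integral_intervalIntegral_path hF hC
    (fun n => (hρ n).measurable) (hσ.integrable.add (integrable_const 1))
    (fun n => ae_of_all _ (hbound n)) (ae_of_all _ hlim)) fun n => ?_
  obtain ⟨T, hT⟩ := (hρ n).exists_le
  have h := hγ _ ((hρ n).measurableSet_ofReal_le (hpos n)) (max T 0) (le_max_right _ _)
  simpa only [min_eq_left (ENNReal.ofReal_le_ofReal (le_max_of_le_left (hT _))),
    ENNReal.toReal_ofReal (hpos n _).le] using h

end BoundedStopping

section Verification

variable {Ω : Type*} {m0 : MeasurableSpace Ω} {P : Measure Ω} {𝓕 : Filtration ℝ m0}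
  {E : Type*} {X : ℝ → Ω → E} {f g w φ : E → ℝ} {Cf Cg : ℝ} {σ : ℕ → Ω → ℝ} {S : Ω → ℝ}

/-- `X` is quasi-left-continuous: almost surely, no jump occurs at the limit of a nondecreasing
sequence of finite stopping times. -/
def IsQuasiLeftContinuous [TopologicalSpace E] (X : ℝ → Ω → E) (𝓕 : Filtration ℝ m0)
    (P : Measure Ω) : Prop :=
  ∀ (τn : ℕ → Ω → ℝ) (τ : Ω → ℝ),
    (∀ n, IsStoppingTime 𝓕 fun ω => (τn n ω : WithTop ℝ)) → (∀ n ω, 0 ≤ τn n ω) →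
    (∀ ω, Monotone fun n => τn n ω) →
    (∀ᵐ ω ∂P, Tendsto (fun n => τn n ω) atTop (𝓝 (τ ω))) →
    ∀ᵐ ω ∂P, Tendsto (fun n => X (τn n ω) ω) atTop (𝓝 (X (τ ω) ω))

lemma IsQuasiLeftContinuous.tendsto [TopologicalSpace E] (hqlc : IsQuasiLeftContinuous X 𝓕 P)
    (hσ : ∀ n, IsBoundedStoppingTime 𝓕 (σ n)) (hmono : ∀ ω, Monotone fun n => σ n ω)
    (hlim : ∀ᵐ ω ∂P, Tendsto (fun n => σ n ω) atTop (𝓝 (S ω))) :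
    ∀ᵐ ω ∂P, Tendsto (fun n => X (σ n ω) ω) atTop (𝓝 (X (S ω) ω)) :=
  hqlc σ S (fun n => (hσ n).isStoppingTime) (fun n => (hσ n).nonneg) hmono hlim

lemma neg_mul_integral_le_sub_integral_payoff [IsProbabilityMeasure P] [MeasurableSpace E]
    (hX : Measurable (Function.uncurry X)) (hfm : Measurable f) (hf : ∀ x, |f x| ≤ Cf)
    (hgm : Measurable g) (hg : ∀ x, |g x| ≤ Cg) {ρ : Ω → ℝ} (hρ : Measurable ρ)
    (hρi : Integrable ρ P) {d γ : ℝ}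
    (hγ : ∫ ω, (∫ s in (0 : ℝ)..ρ ω, (f (X s ω) - d)) ∂P ≤ γ) :
    -d * ∫ ω, ρ ω ∂P ≤ γ + Cg - ∫ ω, payoff X f g (ρ ω) ω ∂P := by
  have hF : Measurable (Function.uncurry fun s ω => f (X s ω)) := hfm.comp hX
  have hFi : Integrable (fun ω => ∫ s in (0 : ℝ)..ρ ω, f (X s ω)) P :=
    integrable_intervalIntegral_path hF (fun _ _ => hf _) hρ hρi
  have hgi : Integrable (fun ω => g (X (ρ ω) ω)) P := integrable_comp_process hX hgm hg hρ
  have hsub : ∫ ω, (∫ s in (0 : ℝ)..ρ ω, (f (X s ω) - d)) ∂P =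
      ∫ ω, (∫ s in (0 : ℝ)..ρ ω, f (X s ω)) ∂P - (∫ ω, ρ ω ∂P) * d := by
    rw [← integral_mul_const, ← integral_sub hFi (hρi.mul_const d)]
    refine integral_congr_ae (ae_of_all _ fun ω => ?_)
    simp only [intervalIntegral.integral_sub (intervalIntegrable_path hF (fun _ _ => hf _) ω _ _)
      intervalIntegrable_const, intervalIntegral.integral_const, sub_zero, smul_eq_mul]
  have hpayoff : ∫ ω, payoff X f g (ρ ω) ω ∂P =
      ∫ ω, (∫ s in (0 : ℝ)..ρ ω, f (X s ω)) ∂P + ∫ ω, g (X (ρ ω) ω) ∂P := integral_add hFi hgi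
  have hgle : ∫ ω, g (X (ρ ω) ω) ∂P ≤ Cg := by
    simpa using integral_mono hgi (integrable_const Cg) fun ω => le_of_abs_le (hg _)
  linarith

lemma ae_comp_limit_nonpos_of_tendsto_integral [TopologicalSpace E] [MeasurableSpace E]
    [OpensMeasurableSpace E] (hX : Measurable (Function.uncurry X))
    (hφ : LowerSemicontinuous φ) (hφ0 : ∀ x, 0 ≤ φ x) (hS : AEMeasurable S P)
    (hint : ∀ n, Integrable (fun ω => φ (X (σ n ω) ω)) P)
    (hzero : Tendsto (fun n => ∫ ω, φ (X (σ n ω) ω) ∂P) atTop (𝓝 0))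
    (hlim : ∀ᵐ ω ∂P, Tendsto (fun n => X (σ n ω) ω) atTop (𝓝 (X (S ω) ω))) :
    ∀ᵐ ω ∂P, φ (X (S ω) ω) ≤ 0 :=
  ae_nonpos_of_tendsto_integral_zero
    ((hφ.measurable.comp hX).comp_aemeasurable (hS.prodMk aemeasurable_id)) hint
    (fun _ _ => hφ0 _) hzero (hlim.mono fun _ hω a ha => hω.eventually (hφ _ a ha))

lemma gap_min_hitTime_le [TopologicalSpace E]
    (hrc : ∀ ω t, 0 ≤ t → ContinuousWithinAt (fun s => X s ω) (Ici t) t)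
    (hg : Continuous g) (hw : LowerSemicontinuous w) (hgw : ∀ x, g x ≤ w x) {t : ℝ}
    (ht : 0 ≤ t) (ω : Ω) :
    (w - g) (X (min (hitTime X g w 0 ω) (ENNReal.ofReal t)).toReal ω) ≤ (w - g) (X t ω) := by
  rcases le_total (hitTime X g w 0 ω) (ENNReal.ofReal t) with hle | hle
  · have hattained :=
      sub_le_of_hitTime_lt_top (hrc ω) hg hw (hle.trans_lt ENNReal.ofReal_lt_top)
    rw [min_eq_left hle]
    simp only [Pi.sub_apply]
    linarith [hgw (X t ω)]
  · rw [min_eq_right hle, ENNReal.toReal_ofReal ht]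

lemma tendsto_integral_payoff_min [TopologicalSpace E] [MeasurableSpace E]
    [OpensMeasurableSpace E] [IsFiniteMeasure P] (hX : Measurable (Function.uncurry X))
    (hqlc : IsQuasiLeftContinuous X 𝓕 P) (hfm : Measurable f) (hf : ∀ x, |f x| ≤ Cf)
    (hgc : Continuous g) (hg : ∀ x, |g x| ≤ Cg) {τ : Ω → ℝ≥0∞}
    (hτ : ∀ t : ℝ, MeasurableSet[𝓕 t] {ω | τ ω ≤ ENNReal.ofReal t})
    (hσ : ∀ n, IsBoundedStoppingTime 𝓕 (σ n)) (hmono : ∀ ω, Monotone fun n => σ n ω)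
    (hS : Integrable S P) (hlim : ∀ᵐ ω ∂P, Tendsto (fun n => σ n ω) atTop (𝓝 (S ω)))
    (hτS : ∀ᵐ ω ∂P, τ ω ≤ ENNReal.ofReal (S ω)) :
    Tendsto (fun n => ∫ ω, payoff X f g (min (τ ω) (ENNReal.ofReal (σ n ω))).toReal ω ∂P) atTop
      (𝓝 (∫ ω, payoff X f g (τ ω).toReal ω ∂P)) := by
  have hρ := fun n => (hσ n).toReal_min hτ
  have hρmono : ∀ ω, Monotone fun n => (min (τ ω) (ENNReal.ofReal (σ n ω))).toReal :=
    fun ω m n hmn => ENNReal.toReal_mono (min_lt_of_right_lt ENNReal.ofReal_lt_top).ne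
      (min_le_min_left _ (ENNReal.ofReal_le_ofReal (hmono ω hmn)))
  have hρlim : ∀ᵐ ω ∂P, Tendsto (fun n => (min (τ ω) (ENNReal.ofReal (σ n ω))).toReal) atTop
      (𝓝 (τ ω).toReal) := by
    filter_upwards [hlim, hτS] with ω hω hωS
    have hmin := (tendsto_const_nhds (x := τ ω)).min (ENNReal.tendsto_ofReal hω)
    rw [min_eq_left hωS] at hmin
    exact (ENNReal.tendsto_toReal (ne_top_of_le_ne_top ENNReal.ofReal_ne_top hωS)).comp hmin
  refine tendsto_integral_payoff hX hfm hf hgc hg (fun n => (hρ n).measurable)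
    (measurable_of_measurableSet_le_ofReal hτ).ennreal_toReal hS (fun n => ?_) hρlim
    (hqlc.tendsto hρ hρmono hρlim)
  filter_upwards [hlim] with ω hω
  rw [abs_of_nonneg ENNReal.toReal_nonneg]
  exact (ENNReal.toReal_le_of_le_ofReal ((hσ n).nonneg ω) (min_le_right _ _)).trans
    ((hmono ω).ge_of_tendsto hω n)

lemma integrable_payoff_of_isOptionalSupermartingale [TopologicalSpace E] [MeasurableSpace E]
    [OpensMeasurableSpace E] [IsFiniteMeasure P] (hX : Measurable (Function.uncurry X))
    (hrc : ∀ ω t, 0 ≤ t → ContinuousWithinAt (fun s => X s ω) (Ici t) t)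
    (hfm : Measurable f) (hf : ∀ x, |f x| ≤ Cf) (hw : LowerSemicontinuous w) {K : ℝ}
    (hK : ∀ x, K ≤ w x) (hZ : IsOptionalSupermartingale (payoff X f w) 𝓕 P) {ρ : Ω → ℝ}
    (hρ : IsBoundedStoppingTime 𝓕 ρ) : Integrable (fun ω => payoff X f w (ρ ω) ω) P :=
  hZ.integrable_stopped (measurable_uncurry_payoff hX hfm hf hw.measurable)
    (fun ω t ht => lowerSemicontinuousWithinAt_payoff hX hfm hf hw (hrc ω t ht))
    (fun T => ⟨K - Cf * T, fun _ ht ω => le_payoff hf hK ht ω⟩) hρ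

lemma exists_integrable_tendsto_of_payoff_ge [IsProbabilityMeasure P] [MeasurableSpace E]
    (hX : Measurable (Function.uncurry X)) (hfm : Measurable f) (hf : ∀ x, |f x| ≤ Cf)
    (hgm : Measurable g) (hg : ∀ x, |g x| ≤ Cg) (hσ : ∀ n, IsBoundedStoppingTime 𝓕 (σ n))
    (hmono : ∀ ω, Monotone fun n => σ n ω) {d γ : ℝ} (hd : d < 0)
    (hγ : ∀ n, ∫ ω, (∫ s in (0 : ℝ)..σ n ω, (f (X s ω) - d)) ∂P ≤ γ) {v : ℝ} {ε : ℕ → ℝ}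
    (hε : Tendsto ε atTop (𝓝 0)) (hopt : ∀ n, v - ε n ≤ ∫ ω, payoff X f g (σ n ω) ω ∂P) :
    ∃ S : Ω → ℝ, Integrable S P ∧ ∫ ω, S ω ∂P ≤ (γ + Cg - v) / (-d) ∧
      ∀ᵐ ω ∂P, Tendsto (fun n => σ n ω) atTop (𝓝 (S ω)) := by
  refine exists_integrable_tendsto_integral_le_of_monotone (b := fun n => (γ + Cg - v + ε n) / (-d))
    (fun n => (hσ n).integrable) (fun n => (hσ n).nonneg) hmono (fun n => ?_) ?_
  · rw [le_div_iff₀' (neg_pos.2 hd)]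
    linarith [hopt n, neg_mul_integral_le_sub_integral_payoff hX hfm hf hgm hg (hσ n).measurable
      (hσ n).integrable (hγ n)]
  · simpa using (hε.const_add (γ + Cg - v)).div_const (-d)

lemma ae_hitTime_le_of_payoff_ge [TopologicalSpace E] [MeasurableSpace E]
    [OpensMeasurableSpace E] [IsFiniteMeasure P] (hX : Measurable (Function.uncurry X))
    (hg : Continuous g) (hw : LowerSemicontinuous w) (hgw : ∀ x, g x ≤ w x)
    (hZ : IsOptionalSupermartingale (payoff X f w) 𝓕 P)
    (hσ : ∀ n, IsBoundedStoppingTime 𝓕 (σ n))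
    (hZσ : ∀ n, Integrable (fun ω => payoff X f w (σ n ω) ω) P)
    (hGσ : ∀ n, Integrable (fun ω => payoff X f g (σ n ω) ω) P) {ε : ℕ → ℝ}
    (hε : Tendsto ε atTop (𝓝 0))
    (hopt : ∀ n, ∫ ω, payoff X f w 0 ω ∂P - ε n ≤ ∫ ω, payoff X f g (σ n ω) ω ∂P)
    (hS : Integrable S P) (hlim : ∀ᵐ ω ∂P, Tendsto (fun n => σ n ω) atTop (𝓝 (S ω)))
    (hXlim : ∀ᵐ ω ∂P, Tendsto (fun n => X (σ n ω) ω) atTop (𝓝 (X (S ω) ω))) :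
    ∀ᵐ ω ∂P, hitTime X g w 0 ω ≤ ENNReal.ofReal (S ω) := by
  have hgap : ∀ n ω, payoff X f w (σ n ω) ω - payoff X f g (σ n ω) ω = (w - g) (X (σ n ω) ω) :=
    fun n ω => payoff_sub_payoff X f w g (σ n ω) ω
  have hzero : Tendsto (fun n => ∫ ω, (w - g) (X (σ n ω) ω) ∂P) atTop (𝓝 0) := by
    refine squeeze_zero (fun n => integral_nonneg fun ω => sub_nonneg.2 (hgw _)) (fun n => ?_) hε
    simp_rw [← hgap n]
    exact hZ.integral_gap_le (hσ n) (hZσ n) (hGσ n) (hopt n)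
  have hφ : LowerSemicontinuous (w - g) :=
    sub_eq_add_neg w g ▸ hw.add hg.neg.lowerSemicontinuous
  filter_upwards [hlim, ae_comp_limit_nonpos_of_tendsto_integral hX hφ
    (fun x => sub_nonneg.2 (hgw x)) hS.aemeasurable
    (fun n => ((hZσ n).sub (hGσ n)).congr (ae_of_all _ (hgap n))) hzero hXlim] with ω hω hnonpos
  refine hitTime_le (ge_of_tendsto' hω fun n => (hσ n).nonneg ω) ?_
  rw [Pi.sub_apply] at hnonpos
  linarith

lemma tendsto_integral_payoff_min_hitTime [TopologicalSpace E] [MeasurableSpace E]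
    [OpensMeasurableSpace E] [IsFiniteMeasure P] (hX : Measurable (Function.uncurry X))
    (hrc : ∀ ω t, 0 ≤ t → ContinuousWithinAt (fun s => X s ω) (Ici t) t)
    (hfm : Measurable f) (hf : ∀ x, |f x| ≤ Cf) (hgc : Continuous g) (hg : ∀ x, |g x| ≤ Cg)
    (hw : LowerSemicontinuous w) (hgw : ∀ x, g x ≤ w x)
    (hZ : IsOptionalSupermartingale (payoff X f w) 𝓕 P)
    (hhit : ∀ t : ℝ, MeasurableSet[𝓕 t] {ω | hitTime X g w 0 ω ≤ ENNReal.ofReal t})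
    (hσ : ∀ n, IsBoundedStoppingTime 𝓕 (σ n)) {ε : ℕ → ℝ} (hε : Tendsto ε atTop (𝓝 0))
    (hopt : ∀ n, ∫ ω, payoff X f w 0 ω ∂P - ε n ≤ ∫ ω, payoff X f g (σ n ω) ω ∂P) :
    Tendsto (fun n => ∫ ω,
        payoff X f g (min (hitTime X g w 0 ω) (ENNReal.ofReal (σ n ω))).toReal ω ∂P) atTop
      (𝓝 (∫ ω, payoff X f w 0 ω ∂P)) := by
  have hZi : ∀ {ρ}, IsBoundedStoppingTime 𝓕 ρ → Integrable (fun ω => payoff X f w (ρ ω) ω) P :=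
    integrable_payoff_of_isOptionalSupermartingale hX hrc hfm hf hw
      (fun x => (neg_le_of_abs_le (hg x)).trans (hgw x)) hZ
  have hGi : ∀ {ρ}, IsBoundedStoppingTime 𝓕 ρ → Integrable (fun ω => payoff X f g (ρ ω) ω) P :=
    fun hρ => integrable_payoff hX hfm hf hgc.measurable hg hρ.measurable hρ.integrable
  have hρ := fun n => (hσ n).toReal_min hhit
  have hlower : Tendsto (fun n => ∫ ω, payoff X f w 0 ω ∂P - ε n) atTop
      (𝓝 (∫ ω, payoff X f w 0 ω ∂P)) := by simpa using hε.const_sub (∫ ω, payoff X f w 0 ω ∂P)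
  refine tendsto_of_tendsto_of_tendsto_of_le_of_le hlower tendsto_const_nhds
    (fun n => (hopt n).trans ?_) fun n => ?_
  · refine hZ.integral_le_of_gap_le (hρ n) (hσ n) (fun ω => ENNReal.toReal_le_of_le_ofReal
      ((hσ n).nonneg ω) (min_le_right _ _)) (hZi (hρ n)) (hZi (hσ n)) (hGi (hρ n)) (hGi (hσ n))
      fun ω => ?_
    simpa only [payoff_sub_payoff, Pi.sub_apply] using
      gap_min_hitTime_le hrc hgc hw hgw ((hσ n).nonneg ω) ω
  · refine le_trans ?_ (hZ.integral_le_initial (hρ n))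
    exact integral_mono (hGi (hρ n)) (hZi (hρ n)) fun ω => add_le_add_right (hgw _) _

end Verification

theorem stmt5_general
    {Ω : Type*} {m0 : MeasurableSpace Ω} (P : Measure Ω) [IsProbabilityMeasure P]
    (𝓕 : Filtration ℝ m0)
    {E : Type*} [TopologicalSpace E] [MeasurableSpace E] [OpensMeasurableSpace E]
    (X : ℝ → Ω → E) (hX : Measurable (Function.uncurry X))
    (hrc : ∀ ω t, 0 ≤ t → ContinuousWithinAt (fun s => X s ω) (Ici t) t)
    (hqlc : IsQuasiLeftContinuous X 𝓕 P)
    (f g : E → ℝ) (hfm : Measurable f) (hgc : Continuous g)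
    (Cf Cg : ℝ) (hf : ∀ x, |f x| ≤ Cf) (hg : ∀ x, |g x| ≤ Cg)
    (w : E → ℝ) (hw : LowerSemicontinuous w) (hgw : ∀ x, g x ≤ w x)
    (hZ : IsOptionalSupermartingale (payoff X f w) 𝓕 P)
    (d γ : ℝ) (hd : d < 0)
    (hγ : ∀ τ : Ω → ℝ≥0∞, (∀ t : ℝ, MeasurableSet[𝓕 t] {ω | τ ω ≤ ENNReal.ofReal t}) →
      ∀ T : ℝ, 0 ≤ T →
      ∫ ω, (∫ s in (0 : ℝ)..(min (τ ω) (ENNReal.ofReal T)).toReal, (f (X s ω) - d)) ∂P ≤ γ)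
    (σ : ℕ → Ω → ℝ) (hσ : ∀ n, IsBoundedStoppingTime 𝓕 (σ n))
    (hmono : ∀ ω, Monotone fun n => σ n ω)
    (ε : ℕ → ℝ) (hε : Tendsto ε atTop (𝓝 0))
    (hopt : ∀ n, ∫ ω, w (X 0 ω) ∂P - ε n ≤ stopValue P X f g fun ω => ENNReal.ofReal (σ n ω))
    (hhit : ∀ t : ℝ, MeasurableSet[𝓕 t] {ω | hitTime X g w 0 ω ≤ ENNReal.ofReal t}) :
    (∀ᵐ ω ∂P, hitTime X g w 0 ω < ⊤) ∧
    Integrable (fun ω => (hitTime X g w 0 ω).toReal) P ∧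
    ∫ ω, (hitTime X g w 0 ω).toReal ∂P ≤ (γ + 2 * Cg) / (-d) ∧
    ∫ ω, payoff X f g (hitTime X g w 0 ω).toReal ω ∂P = ∫ ω, w (X 0 ω) ∂P := by
  have hwlower : ∀ x, -Cg ≤ w x := fun x => (neg_le_of_abs_le (hg x)).trans (hgw x)
  have hZ0 := hZ.integrable 0 le_rfl
  simp only [stopValue_ofReal X f g (hσ _), ← payoff_zero X f w] at hopt ⊢
  have hvalue : -Cg ≤ ∫ ω, payoff X f w 0 ω ∂P := by
    simpa using integral_mono (integrable_const (-Cg)) hZ0 fun ω =>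
      (hwlower _).trans_eq (payoff_zero X f w ω).symm
  have hγσ : ∀ n, ∫ ω, (∫ s in (0 : ℝ)..σ n ω, (f (X s ω) - d)) ∂P ≤ γ := fun n =>
    integral_intervalIntegral_le_of_forall_min (F := fun s ω => f (X s ω) - d)
      ((hfm.comp hX).sub_const d)
      (fun s ω => (abs_sub _ _).trans (add_le_add_left (hf _) |d|)) hγ (hσ n)
  obtain ⟨S, hS, hSle, hlim⟩ := exists_integrable_tendsto_of_payoff_ge hX hfm hf hgc.measurable hg
    hσ hmono hd hγσ hε hopt
  have hτS := ae_hitTime_le_of_payoff_ge hX hgc hw hgw hZ hσ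
    (fun n => integrable_payoff_of_isOptionalSupermartingale hX hrc hfm hf hw hwlower hZ (hσ n))
    (fun n => integrable_payoff hX hfm hf hgc.measurable hg (hσ n).measurable (hσ n).integrable)
    hε hopt hS hlim (hqlc.tendsto hσ hmono hlim)
  have hτle : ∀ᵐ ω ∂P, (hitTime X g w 0 ω).toReal ≤ S ω := by
    filter_upwards [hlim, hτS] with ω hω hωS
    exact ENNReal.toReal_le_of_le_ofReal (ge_of_tendsto' hω fun n => (hσ n).nonneg ω) hωS
  have hτi : Integrable (fun ω => (hitTime X g w 0 ω).toReal) P := hS.mono'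
    (measurable_of_measurableSet_le_ofReal hhit).ennreal_toReal.aestronglyMeasurable
    (hτle.mono fun ω hω => (abs_of_nonneg ENNReal.toReal_nonneg).trans_le hω)
  refine ⟨hτS.mono fun ω hω => hω.trans_lt ENNReal.ofReal_lt_top, hτi, ?_, ?_⟩
  · refine (integral_mono_ae hτi hS hτle).trans (hSle.trans ?_)
    exact div_le_div_of_nonneg_right (by linarith) (neg_pos.2 hd).le
  · exact tendsto_nhds_unique
      (tendsto_integral_payoff_min hX hqlc hfm hf hgc hg hhit hσ hmono hS hlim hτS)
      (tendsto_integral_payoff_min_hitTime hX hrc hfm hf hgc hg hw hgw hZ hhit hσ hε hopt)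

/-- existence, integrability and optimality of the stopping time
`τ* = inf{t ≥ 0 : g(X_t) ≥ w(X_t)}` for the undiscounted infinite-horizon stopping
problem with value `w₀`. -/
theorem stmt5
    {Ω : Type*} {m0 : MeasurableSpace Ω} (P : Measure Ω) [IsProbabilityMeasure P]
    (𝓕 : Filtration ℝ m0)
    {E : Type*} [MetricSpace E] [MeasurableSpace E] [BorelSpace E]
    (X : ℝ → Ω → E) (hX : ProgMeasurable 𝓕 X)
    -- right-continuous paths
    (hrc : ∀ ω, ∀ t : ℝ, 0 ≤ t → ContinuousWithinAt (fun s => X s ω) (Ici t) t)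
    -- quasi-left-continuity
    (hqlc : ∀ (τn : ℕ → Ω → ℝ) (τ : Ω → ℝ),
      (∀ n, IsStoppingTime 𝓕 (fun ω => (τn n ω : WithTop ℝ))) → (∀ n ω, 0 ≤ τn n ω) →
      (∀ ω, Monotone fun n => τn n ω) →
      (∀ᵐ ω ∂P, Tendsto (fun n => τn n ω) atTop (𝓝 (τ ω))) →
      ∀ᵐ ω ∂P, Tendsto (fun n => X (τn n ω) ω) atTop (𝓝 (X (τ ω) ω)))
    (f g : E → ℝ) (hfc : Continuous f) (hgc : Continuous g)
    (Cf Cg : ℝ) (hfb : ∀ x, |f x| ≤ Cf) (hgb : ∀ x, |g x| ≤ Cg)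
    (w : E → ℝ) (hwlsc : LowerSemicontinuous w) (hgw : ∀ x, g x ≤ w x)
    (w₀ : ℝ)
    -- w₀ is the supremum of V(τ) over all stopping times τ
    (hub : ∀ τ : Ω → ℝ≥0∞,
      (∀ t : ℝ, MeasurableSet[𝓕 t] {ω | τ ω ≤ ENNReal.ofReal t}) →
      stopValue P X f g τ ≤ w₀)
    -- (i) Z is an integrable adapted optional-sampling supermartingale with Z_0 = w₀
    (hZint : ∀ t : ℝ, 0 ≤ t →
      Integrable (fun ω => (∫ s in (0:ℝ)..t, f (X s ω)) + w (X t ω)) P)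
    (hZadp : ∀ t : ℝ, 0 ≤ t →
      StronglyMeasurable[𝓕 t] fun ω => (∫ s in (0:ℝ)..t, f (X s ω)) + w (X t ω))
    (hZsup : ∀ (σ₁ σ₂ : Ω → ℝ) (h1 : IsStoppingTime 𝓕 (fun ω => (σ₁ ω : WithTop ℝ)))
      (_h2 : IsStoppingTime 𝓕 (fun ω => (σ₂ ω : WithTop ℝ))),
      (∀ ω, 0 ≤ σ₁ ω) → (∀ ω, σ₁ ω ≤ σ₂ ω) → (∃ T, ∀ ω, σ₂ ω ≤ T) →
      ∀ᵐ ω ∂P,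
        (P[(fun ω' => (∫ s in (0:ℝ)..(σ₂ ω'), f (X s ω')) + w (X (σ₂ ω') ω')) |
            h1.measurableSpace]) ω
          ≤ (∫ s in (0:ℝ)..(σ₁ ω), f (X s ω)) + w (X (σ₁ ω) ω))
    (hZ0 : ∀ᵐ ω ∂P, (∫ s in (0:ℝ)..(0:ℝ), f (X s ω)) + w (X 0 ω) = w₀)
    -- (ii) assumption (B1)
    (d γ : ℝ) (hd : d < 0)
    (hγ : ∀ τ : Ω → ℝ≥0∞,
      (∀ t : ℝ, MeasurableSet[𝓕 t] {ω | τ ω ≤ ENNReal.ofReal t}) →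
      ∀ T : ℝ, 0 ≤ T →
      ∫ ω, (∫ s in (0:ℝ)..((min (τ ω) (ENNReal.ofReal T)).toReal),
        (f (X s ω) - d)) ∂P ≤ γ)
    -- (iii) a nondecreasing sequence of bounded 1/m-optimal stopping times
    (σm : ℕ → Ω → ℝ) (hσmst : ∀ m, IsStoppingTime 𝓕 (fun ω => (σm m ω : WithTop ℝ)))
    (hσm0 : ∀ m ω, 0 ≤ σm m ω) (hσmb : ∀ m, ∃ T, ∀ ω, σm m ω ≤ T)
    (hσmmono : ∀ ω, Monotone fun m => σm m ω)
    (hσmopt : ∀ m : ℕ, 1 ≤ m →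
      w₀ - 1 / (m : ℝ) ≤ stopValue P X f g (fun ω => ENNReal.ofReal (σm m ω)))
    -- (iv) the hitting times τ_ε are stopping times
    (hhit : ∀ ε : ℝ, 0 ≤ ε →
      ∀ t : ℝ, MeasurableSet[𝓕 t] {ω | hitTime X g w ε ω ≤ ENNReal.ofReal t}) :
    (∀ᵐ ω ∂P, hitTime X g w 0 ω < ⊤) ∧
    (∫ ω, (hitTime X g w 0 ω).toReal ∂P ≤ (γ + 2 * Cg + 1) / (-d)) ∧
    (∫ ω, ((∫ s in (0:ℝ)..((hitTime X g w 0 ω).toReal), f (X s ω))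
        + g (X ((hitTime X g w 0 ω).toReal) ω)) ∂P = w₀) := by
  obtain rfl : ∫ ω, w (X 0 ω) ∂P = w₀ := by simpa using integral_congr_ae hZ0
  have hσ : ∀ m, IsBoundedStoppingTime 𝓕 (σm m) := fun m => ⟨hσmst m, hσm0 m, hσmb m⟩
  have hZ : IsOptionalSupermartingale (payoff X f w) 𝓕 P := ⟨hZint, fun σ₁ σ₂ h₁ h₂ hle =>
    hZsup σ₁ σ₂ h₁.isStoppingTime h₂.isStoppingTime h₁.nonneg hle h₂.exists_le⟩
  obtain ⟨hfin, -, hE, hvalue⟩ := stmt5_general P 𝓕 X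
    (measurable_uncurry_of_isStronglyProgressive hX) hrc hqlc f g hfc.measurable hgc Cf Cg hfb hgb
    w hwlsc hgw hZ d γ hd hγ (fun m => σm (m + 1)) (fun m => hσ (m + 1))
    (fun ω i j hij => hσmmono ω (Nat.succ_le_succ hij)) (fun m => 1 / ((m + 1 : ℕ) : ℝ))
    (by simpa using tendsto_one_div_add_atTop_nhds_zero_nat (𝕜 := ℝ))
    (fun m => hσmopt (m + 1) m.succ_pos) (hhit 0 le_rfl)
  exact ⟨hfin, hE.trans (div_le_div_of_nonneg_right (by linarith) (neg_pos.2 hd).le), hvalue⟩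
end

section
/- Let E be a locally compact metric space, μ a Borel probability measure on E, f : E → ℝ bounded and continuous, and (κ_s)_{s≥0} a family of Markov kernels on E such that: for each x ∈ E the map s ↦ ∫ f d(κ_s x) is measurable; for each s ≥ 0 the map x ↦ ∫ f d(κ_s x) is continuous; and there exist a function K : E → (0,∞) bounded on compact sets and a Lebesgue-integrable h : [0,∞) → [0,∞) such that |κ_s x (A) − μ(A)| ≤ K(x) h(s) for every Borel set A ⊆ E, every x ∈ E and every s ≥ 0. Then for every x ∈ E the function s ↦ ∫ f d(κ_s x) − ∫ f dμ is Lebesgue integrable on [0,∞), and q(x) := ∫₀^∞ (∫ f d(κ_s x) − ∫ f dμ) ds defines a finite-valued continuous function on E. -/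
open MeasureTheory Filter Set
open scoped ENNReal Topology

/-! By the layer-cake formula, the integral of a function `0 ≤ g ≤ M` against a finite measure
`ν` is `∫ t in 0..M, ν {t ≤ g}`, so measures that differ by at most `δ` on every measurable set have
integrals of `g` that differ by at most `δ * M`. Splitting `f` into positive and negative parts
bounds the integrand of the potential by `2 * C * K x * h s`, where `C` bounds `|f|`. Since `K` is
locally bounded, near each point this is dominated by a constant multiple of `h`, and dominated
convergence gives continuity. -/

section SetwiseCloseMeasures

variable {E : Type*} [MeasurableSpace E] {μ ν : Measure E} [IsFiniteMeasure μ] [IsFiniteMeasure ν]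

theorem antitone_measureReal_superlevel (ρ : Measure E) [IsFiniteMeasure ρ] (g : E → ℝ) :
    Antitone fun t : ℝ => ρ.real {y | t ≤ g y} :=
  fun _ _ hst => measureReal_mono fun _ hy => hst.trans hy

theorem integral_eq_intervalIntegral_measureReal_superlevel {g : E → ℝ} (hg : Measurable g) {M : ℝ}
    (hM : 0 ≤ M) (hg_nonneg : ∀ y, 0 ≤ g y) (hg_le : ∀ y, g y ≤ M) :
    ∫ y, g y ∂μ = ∫ t in (0 : ℝ)..M, μ.real {y | t ≤ g y} := by
  have hg_int : Integrable g μ :=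
    .of_bound hg.aestronglyMeasurable M <| .of_forall fun y => by
      rw [Real.norm_of_nonneg (hg_nonneg y)]
      exact hg_le y
  rw [intervalIntegral.integral_of_le hM]
  exact hg_int.integral_eq_integral_Ioc_meas_le (.of_forall hg_nonneg) (.of_forall hg_le)

theorem abs_integral_sub_integral_le_of_nonneg {g : E → ℝ} (hg : Measurable g) {M δ : ℝ}
    (hM : 0 ≤ M) (hg_nonneg : ∀ y, 0 ≤ g y) (hg_le : ∀ y, g y ≤ M)
    (hδ : ∀ A, MeasurableSet A → |ν.real A - μ.real A| ≤ δ) :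
    |(∫ y, g y ∂ν) - ∫ y, g y ∂μ| ≤ δ * M := by
  have hlevel : ∀ t ∈ uIoc 0 M, ‖ν.real {y | t ≤ g y} - μ.real {y | t ≤ g y}‖ ≤ δ :=
    fun t _ => hδ _ (measurableSet_le measurable_const hg)
  rw [integral_eq_intervalIntegral_measureReal_superlevel hg hM hg_nonneg hg_le,
    integral_eq_intervalIntegral_measureReal_superlevel hg hM hg_nonneg hg_le,
    ← intervalIntegral.integral_sub (antitone_measureReal_superlevel ν g).intervalIntegrable
      (antitone_measureReal_superlevel μ g).intervalIntegrable]
  simpa only [Real.norm_eq_abs, sub_zero, abs_of_nonneg hM] using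
    intervalIntegral.norm_integral_le_of_norm_le_const hlevel

theorem abs_integral_sub_integral_le_of_abs_le {f : E → ℝ} (hf : Measurable f) {C δ : ℝ}
    (hC : 0 ≤ C) (hfC : ∀ y, |f y| ≤ C)
    (hδ : ∀ A, MeasurableSet A → |ν.real A - μ.real A| ≤ δ) :
    |(∫ y, f y ∂ν) - ∫ y, f y ∂μ| ≤ δ * (2 * C) := by
  have integral_split (ρ : Measure E) [IsFiniteMeasure ρ] :
      ∫ y, f y ∂ρ = (∫ y, max (f y) 0 ∂ρ) - ∫ y, max (-f y) 0 ∂ρ := by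
    have hf_int : Integrable f ρ := .of_bound hf.aestronglyMeasurable C (.of_forall hfC)
    rw [← integral_sub hf_int.pos_part hf_int.neg_part]
    simp only [max_zero_sub_max_neg_zero_eq_self]
  have hpos := abs_integral_sub_integral_le_of_nonneg (hf.max measurable_const) hC
    (fun y => le_max_right (f y) 0) (fun y => max_le (abs_le'.1 (hfC y)).1 hC) hδ
  have hneg := abs_integral_sub_integral_le_of_nonneg (hf.neg.max measurable_const) hC
    (fun y => le_max_right (-f y) 0) (fun y => max_le (abs_le'.1 (hfC y)).2 hC) hδ
  rw [integral_split ν, integral_split μ, sub_sub_sub_comm]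
  calc _ ≤ δ * C + δ * C := (abs_sub _ _).trans (add_le_add hpos hneg)
    _ = δ * (2 * C) := by ring

end SetwiseCloseMeasures

theorem isBoundedUnder_le_nhds_of_bddAbove_image_isCompact {X β : Type*} [TopologicalSpace X]
    [WeaklyLocallyCompactSpace X] [Preorder β] {K : X → β}
    (hK : ∀ S, IsCompact S → BddAbove (K '' S)) (x : X) : (𝓝 x).IsBoundedUnder (· ≤ ·) K := by
  obtain ⟨S, hS, hSx⟩ := exists_compact_mem_nhds x
  obtain ⟨M, hM⟩ := hK S hS
  exact isBoundedUnder_of_eventually_le <| mem_of_superset hSx fun _ hz =>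
    hM (mem_image_of_mem K hz)

theorem continuous_integral_of_norm_le_mul {X T F : Type*} [TopologicalSpace X]
    [FirstCountableTopology X] [MeasurableSpace T] {τ : Measure T} [NormedAddCommGroup F]
    [NormedSpace ℝ F] {G : X → T → F} {K : X → ℝ} {h : T → ℝ}
    (hG : ∀ x, AEStronglyMeasurable (G x) τ) (hG_le : ∀ x, ∀ᵐ s ∂τ, ‖G x s‖ ≤ K x * h s)
    (hG_cont : ∀ᵐ s ∂τ, Continuous fun x => G x s)
    (hK : ∀ x, (𝓝 x).IsBoundedUnder (· ≤ ·) K) (hh_nonneg : 0 ≤ᵐ[τ] h) (hh : Integrable h τ) :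
    Continuous fun x => ∫ s, G x s ∂τ := by
  refine continuous_iff_continuousAt.2 fun x => ?_
  obtain ⟨M, hM⟩ := (hK x).eventually_le
  refine continuousAt_of_dominated (.of_forall hG) ?_ (hh.const_mul M)
    (hG_cont.mono fun s hs => hs.continuousAt)
  filter_upwards [hM] with z hz
  filter_upwards [hG_le z, hh_nonneg] with s hs hs_nonneg
  exact hs.trans (mul_le_mul_of_nonneg_right hz hs_nonneg)

theorem stmt7_general {X E T : Type*} [TopologicalSpace X] [FirstCountableTopology X]
    [MeasurableSpace E] [MeasurableSpace T] {τ : Measure T} {μ : Measure E} [IsFiniteMeasure μ]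
    {f : E → ℝ} (hf : Measurable f) (hf_bdd : ∃ C, ∀ y, |f y| ≤ C)
    {κ : T → X → Measure E} [∀ s x, IsFiniteMeasure (κ s x)]
    (hκ_meas : ∀ x, AEStronglyMeasurable (fun s => ∫ y, f y ∂κ s x) τ)
    (hκ_cont : ∀ᵐ s ∂τ, Continuous fun x => ∫ y, f y ∂κ s x)
    {K : X → ℝ} (hK : ∀ x, (𝓝 x).IsBoundedUnder (· ≤ ·) K)
    {h : T → ℝ} (hh_nonneg : 0 ≤ᵐ[τ] h) (hh : Integrable h τ)
    (hκμ : ∀ x, ∀ᵐ s ∂τ, ∀ A, MeasurableSet A → |(κ s x).real A - μ.real A| ≤ K x * h s) :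
    (∀ x, Integrable (fun s => (∫ y, f y ∂κ s x) - ∫ y, f y ∂μ) τ) ∧
      Continuous fun x => ∫ s, ((∫ y, f y ∂κ s x) - ∫ y, f y ∂μ) ∂τ := by
  obtain ⟨C, hC⟩ := hf_bdd
  have hbound (x : X) :
      ∀ᵐ s ∂τ, ‖(∫ y, f y ∂κ s x) - ∫ y, f y ∂μ‖ ≤ K x * (h s * (2 * |C|)) := by
    filter_upwards [hκμ x] with s hs
    rw [← mul_assoc]
    exact abs_integral_sub_integral_le_of_abs_le hf (abs_nonneg C)
      (fun y => (hC y).trans (le_abs_self C)) hs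
  have hdom : Integrable (fun s => h s * (2 * |C|)) τ := hh.mul_const _
  have hdom_nonneg : 0 ≤ᵐ[τ] fun s => h s * (2 * |C|) :=
    hh_nonneg.mono fun s hs => mul_nonneg hs (by positivity)
  have hmeas (x : X) :
      AEStronglyMeasurable (fun s => (∫ y, f y ∂κ s x) - ∫ y, f y ∂μ) τ :=
    (hκ_meas x).sub aestronglyMeasurable_const
  exact ⟨fun x => (hdom.const_mul (K x)).mono' (hmeas x) (hbound x),
    continuous_integral_of_norm_le_mul hmeas hbound
      (hκ_cont.mono fun s hs => hs.sub continuous_const) hK hdom_nonneg hdom⟩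

/-- under an integrable total-variation-type speed of convergence of the
transition kernels `κ_s x` to the invariant measure `μ`, the zero-potential
`q(x) = ∫₀^∞ (∫ f d(κ_s x) − ∫ f dμ) ds` is well defined (the integrand is Lebesgue
integrable on `[0,∞)`) and continuous. -/
theorem stmt7
    {E : Type*} [MetricSpace E] [LocallyCompactSpace E]
    [MeasurableSpace E] [BorelSpace E]
    (μ : Measure E) [IsProbabilityMeasure μ]
    (f : E → ℝ) (hfc : Continuous f) (Cf : ℝ) (hfb : ∀ x, |f x| ≤ Cf)
    (κ : ℝ → E → Measure E) (hκp : ∀ s x, IsProbabilityMeasure (κ s x))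
    (hκmeas : ∀ s : ℝ, ∀ A : Set E, MeasurableSet A → Measurable fun x => κ s x A)
    (hmeas_s : ∀ x, Measurable fun s : ℝ => ∫ y, f y ∂(κ s x))
    (hcont_x : ∀ s : ℝ, Continuous fun x => ∫ y, f y ∂(κ s x))
    (K : E → ℝ) (hKpos : ∀ x, 0 < K x)
    (hKb : ∀ C : Set E, IsCompact C → ∃ M : ℝ, ∀ x ∈ C, K x ≤ M)
    (h : ℝ → ℝ) (hh0 : ∀ s, 0 ≤ h s)
    (hhint : IntegrableOn h (Ici (0:ℝ)) volume)
    (hTV : ∀ s : ℝ, 0 ≤ s → ∀ x : E, ∀ A : Set E, MeasurableSet A →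
      |(κ s x A).toReal - (μ A).toReal| ≤ K x * h s) :
    (∀ x : E, IntegrableOn
        (fun s : ℝ => (∫ y, f y ∂(κ s x)) - ∫ y, f y ∂μ) (Ici (0:ℝ)) volume) ∧
    Continuous fun x : E =>
      ∫ s in Ici (0:ℝ), ((∫ y, f y ∂(κ s x)) - ∫ y, f y ∂μ) := by
  have hK := isBoundedUnder_le_nhds_of_bddAbove_image_isCompact fun S hS =>
    (hKb S hS).imp fun _ hM => forall_mem_image.2 hM
  exact stmt7_general hfc.measurable ⟨Cf, hfb⟩
    (fun x => (hmeas_s x).aestronglyMeasurable) (.of_forall hcont_x) hK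
    (.of_forall hh0) hhint fun x =>
      ae_restrict_of_forall_mem measurableSet_Ici fun s hs => hTV s hs x
end

section
/- Assume c ∈ ℝ and that the following large-deviations-type bound holds: for all δ > 0 and ε > 0 there exist N ∈ ℕ and p > 0 such that for every natural number n ≥ N, P(|(nδ)^{-1} ∫₀^{nδ} f(X_s) ds − c| > ε) ≤ e^{−p n δ}. Then for every ε > 0 there exist S > 0, C > 0 and ρ > 0 such that for all t ≥ S: P(sup_{s ≥ t} |s^{-1} ∫₀^s f(X_u) du − c| > ε) ≤ C e^{−ρ t}. -/
open MeasureTheory Filter Set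
open scoped ENNReal Topology

/-!
Since `f` is bounded, the path `a s = ∫₀ˢ f(X_u) du` is Lipschitz, so the deviation
`‖s⁻¹ • a s - c‖` grows by at most `O(δ / s)` between the times `⌊s / δ⌋ δ` and `s`. Hence a large
deviation at some real time `s ≥ t` forces a slightly smaller one at a multiple `n δ` with
`n ≥ ⌊t / δ⌋`. The union bound over these `n` is the tail of a geometric series, of order
`exp (-p t)`.
-/

section LipschitzPath

open scoped NNReal

theorem lipschitzWith_intervalIntegral_of_norm_le {F : Type*} [NormedAddCommGroup F]
    [NormedSpace ℝ F] {K : ℝ≥0} {g : ℝ → F} (hgm : AEStronglyMeasurable g volume)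
    (hg : ∀ x, ‖g x‖ ≤ K) (a : ℝ) :
    LipschitzWith K fun t ↦ ∫ x in a..t, g x := by
  have hint (b b' : ℝ) : IntervalIntegrable g volume b b' :=
    (intervalIntegrable_const (c := (K : ℝ))).mono_fun hgm.restrict
      (.of_forall fun x ↦ (hg x).trans (Real.le_norm_self _))
  refine LipschitzWith.of_dist_le_mul fun t t' ↦ ?_
  rw [dist_eq_norm, intervalIntegral.integral_interval_sub_left (hint a t) (hint a t'),
    Real.dist_eq]
  exact intervalIntegral.norm_integral_le_of_norm_le_const fun x _ ↦ hg x

variable {F : Type*} [SeminormedAddCommGroup F] [NormedSpace ℝ F] {K : ℝ≥0}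

theorem norm_inv_smul_sub_le_add_of_lipschitzOnWith {a : ℝ → F} (ha : LipschitzOnWith K a (Ici 0))
    (c : F) {r s : ℝ} (hr : 0 < r) (hrs : r ≤ s) :
    ‖s⁻¹ • a s - c‖ ≤ ‖r⁻¹ • a r - c‖ + (K + ‖c‖) * (s - r) / s := by
  have hs : 0 < s := hr.trans_le hrs
  have hsplit : s⁻¹ • a s - c =
      (r / s) • (r⁻¹ • a r - c) + s⁻¹ • ((a s - a r) - (s - r) • c) := by
    match_scalars <;> field_simp <;> ring
  have hincr : ‖a s - a r‖ ≤ K * (s - r) := by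
    simpa [dist_eq_norm, abs_of_nonneg (sub_nonneg.2 hrs)] using
      ha.dist_le_mul s hs.le r hr.le
  have hdrift : ‖(a s - a r) - (s - r) • c‖ ≤ (K + ‖c‖) * (s - r) := by
    calc ‖(a s - a r) - (s - r) • c‖ ≤ ‖a s - a r‖ + ‖(s - r) • c‖ := norm_sub_le _ _
      _ ≤ K * (s - r) + (s - r) * ‖c‖ := by
        rw [norm_smul, Real.norm_of_nonneg (sub_nonneg.2 hrs)]
        gcongr
      _ = (K + ‖c‖) * (s - r) := by ring
  calc ‖s⁻¹ • a s - c‖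
      ≤ ‖(r / s) • (r⁻¹ • a r - c)‖ + ‖s⁻¹ • ((a s - a r) - (s - r) • c)‖ :=
        hsplit ▸ norm_add_le _ _
    _ = r / s * ‖r⁻¹ • a r - c‖ + s⁻¹ * ‖(a s - a r) - (s - r) • c‖ := by
        rw [norm_smul, norm_smul, Real.norm_of_nonneg (by positivity),
          Real.norm_of_nonneg (by positivity)]
    _ ≤ 1 * ‖r⁻¹ • a r - c‖ + s⁻¹ * ((K + ‖c‖) * (s - r)) := by
        gcongr
        exact (div_le_one hs).2 hrs
    _ = ‖r⁻¹ • a r - c‖ + (K + ‖c‖) * (s - r) / s := by ring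

theorem norm_inv_smul_sub_le_floor_div_mul_add {a : ℝ → F} (ha : LipschitzOnWith K a (Ici 0))
    (c : F) {δ s : ℝ} (hδ : 0 < δ) (hδs : δ ≤ s) :
    ‖s⁻¹ • a s - c‖ ≤
      ‖(⌊s / δ⌋₊ * δ)⁻¹ • a (⌊s / δ⌋₊ * δ) - c‖ + (K + ‖c‖) * δ / s := by
  have hs : 0 < s := hδ.trans_le hδs
  have hfloor_pos : (0 : ℝ) < ⌊s / δ⌋₊ := by
    exact_mod_cast Nat.floor_pos.2 ((one_le_div hδ).2 hδs)
  have hfloor_le : ⌊s / δ⌋₊ * δ ≤ s := (le_div_iff₀ hδ).1 (Nat.floor_le (by positivity))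
  have hlt_floor : s < (⌊s / δ⌋₊ + 1) * δ := (div_lt_iff₀ hδ).1 (Nat.lt_floor_add_one _)
  refine (norm_inv_smul_sub_le_add_of_lipschitzOnWith ha c (by positivity) hfloor_le).trans ?_
  gcongr
  linarith

theorem lt_norm_floor_div_mul_of_lt_norm {a : ℝ → F} (ha : LipschitzOnWith K a (Ici 0))
    {c : F} {δ η ε s : ℝ} (hδ : 0 < δ) (hηε : η < ε) (hδs : δ ≤ s)
    (hs : (K + ‖c‖) * δ / (ε - η) ≤ s) (hdev : ε < ‖s⁻¹ • a s - c‖) :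
    η < ‖(⌊s / δ⌋₊ * δ)⁻¹ • a (⌊s / δ⌋₊ * δ) - c‖ := by
  have herror : (K + ‖c‖) * δ / s ≤ ε - η :=
    (div_le_comm₀ (sub_pos.2 hηε) (hδ.trans_le hδs)).1 hs
  linarith [norm_inv_smul_sub_le_floor_div_mul_add ha c hδ hδs]

end LipschitzPath

section GeometricTail

theorem measure_iUnion_ge_le_of_le_pow {Ω : Type*} [MeasurableSpace Ω] {μ : Measure Ω}
    {B : ℕ → Set Ω} {r : ℝ≥0∞} {m : ℕ} (hB : ∀ n ≥ m, μ (B n) ≤ r ^ n) :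
    μ (⋃ n ≥ m, B n) ≤ r ^ m * (1 - r)⁻¹ := by
  rw [iUnion_ge_eq_iUnion_nat_add]
  calc μ (⋃ k, B (k + m)) ≤ ∑' k, μ (B (k + m)) := measure_iUnion_le _
    _ ≤ ∑' k, r ^ (k + m) := ENNReal.tsum_le_tsum fun k ↦ hB _ (Nat.le_add_left m k)
    _ = r ^ m * (1 - r)⁻¹ := by
      simp_rw [pow_add, ENNReal.tsum_mul_right, ENNReal.tsum_geometric, mul_comm]

theorem ofReal_exp_neg_pow_floor_mul_inv_le {x : ℝ} (hx : 0 < x) (u : ℝ) :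
    ENNReal.ofReal (Real.exp (-x)) ^ ⌊u⌋₊ * (1 - ENNReal.ofReal (Real.exp (-x)))⁻¹ ≤
      ENNReal.ofReal (Real.exp x / (1 - Real.exp (-x)) * Real.exp (-x * u)) := by
  have hgap : 0 < 1 - Real.exp (-x) := sub_pos.2 (Real.exp_lt_one_iff.2 (neg_lt_zero.2 hx))
  have hpow : Real.exp (-x) ^ ⌊u⌋₊ ≤ Real.exp x * Real.exp (-x * u) := by
    rw [← Real.exp_nat_mul, ← Real.exp_add, Real.exp_le_exp]
    nlinarith [Nat.lt_floor_add_one u]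
  rw [← ENNReal.ofReal_one, ← ENNReal.ofReal_sub _ (Real.exp_nonneg _),
    ← ENNReal.ofReal_inv_of_pos hgap, ← ENNReal.ofReal_pow (Real.exp_nonneg _),
    ← ENNReal.ofReal_mul (by positivity)]
  apply ENNReal.ofReal_le_ofReal
  calc Real.exp (-x) ^ ⌊u⌋₊ * (1 - Real.exp (-x))⁻¹
      ≤ Real.exp x * Real.exp (-x * u) * (1 - Real.exp (-x))⁻¹ := by gcongr
    _ = Real.exp x / (1 - Real.exp (-x)) * Real.exp (-x * u) := by ring

end GeometricTail

section LargeDeviations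

open scoped NNReal

variable {Ω : Type*} [MeasurableSpace Ω] {μ : Measure Ω}
  {F : Type*} [SeminormedAddCommGroup F] [NormedSpace ℝ F] {K : ℝ≥0} {A : ℝ → Ω → F} {c : F} {δ : ℝ}

theorem measure_exists_ge_lt_norm_inv_smul_sub_le
    (hA : ∀ ω, LipschitzOnWith K (A · ω) (Ici 0)) (hδ : 0 < δ) {η ε : ℝ} (hηε : η < ε)
    {N : ℕ} {p : ℝ} (hp : 0 < p)
    (hLD : ∀ n : ℕ, N ≤ n → μ {ω | η < ‖(n * δ)⁻¹ • A (n * δ) ω - c‖} ≤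
      ENNReal.ofReal (Real.exp (-p * n * δ)))
    {t : ℝ} (hδt : δ ≤ t) (hNt : N * δ ≤ t) (ht : (K + ‖c‖) * δ / (ε - η) ≤ t) :
    μ {ω | ∃ s, t ≤ s ∧ ε < ‖s⁻¹ • A s ω - c‖} ≤
      ENNReal.ofReal (Real.exp (p * δ) / (1 - Real.exp (-(p * δ))) * Real.exp (-p * t)) := by
  set B : ℕ → Set Ω := fun n ↦ {ω | η < ‖(n * δ)⁻¹ • A (n * δ) ω - c‖}
  have hsub : {ω | ∃ s, t ≤ s ∧ ε < ‖s⁻¹ • A s ω - c‖} ⊆ ⋃ n ≥ ⌊t / δ⌋₊, B n := by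
    rintro ω ⟨s, hts, hdev⟩
    exact mem_iUnion₂.2 ⟨⌊s / δ⌋₊, Nat.floor_mono (by gcongr),
      lt_norm_floor_div_mul_of_lt_norm (hA ω) hδ hηε (hδt.trans hts) (ht.trans hts) hdev⟩
  have hB : ∀ n ≥ ⌊t / δ⌋₊, μ (B n) ≤ ENNReal.ofReal (Real.exp (-(p * δ))) ^ n := by
    intro n hn
    have hNn : N ≤ n := (Nat.le_floor ((le_div_iff₀ hδ).2 hNt)).trans hn
    rw [← ENNReal.ofReal_pow (Real.exp_nonneg _), ← Real.exp_nat_mul]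
    convert hLD n hNn using 3
    ring
  calc μ {ω | ∃ s, t ≤ s ∧ ε < ‖s⁻¹ • A s ω - c‖}
      ≤ μ (⋃ n ≥ ⌊t / δ⌋₊, B n) := measure_mono hsub
    _ ≤ ENNReal.ofReal (Real.exp (-(p * δ))) ^ ⌊t / δ⌋₊ *
          (1 - ENNReal.ofReal (Real.exp (-(p * δ))))⁻¹ := measure_iUnion_ge_le_of_le_pow hB
    _ ≤ ENNReal.ofReal (Real.exp (p * δ) / (1 - Real.exp (-(p * δ))) *
          Real.exp (-(p * δ) * (t / δ))) :=
        ofReal_exp_neg_pow_floor_mul_inv_le (by positivity) (t / δ)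
    _ = ENNReal.ofReal (Real.exp (p * δ) / (1 - Real.exp (-(p * δ))) * Real.exp (-p * t)) := by
      congr 3
      field_simp

theorem stmt8_general (hA : ∀ ω, LipschitzOnWith K (A · ω) (Ici 0)) (hδ : 0 < δ)
    (hLD : ∀ ε : ℝ, 0 < ε → ∃ N : ℕ, ∃ p : ℝ, 0 < p ∧ ∀ n : ℕ, N ≤ n →
      μ {ω | ε < ‖(n * δ)⁻¹ • A (n * δ) ω - c‖} ≤ ENNReal.ofReal (Real.exp (-p * n * δ))) :
    ∀ ε : ℝ, 0 < ε → ∃ S : ℝ, 0 < S ∧ ∃ C : ℝ, 0 < C ∧ ∃ ρ : ℝ, 0 < ρ ∧ ∀ t : ℝ, S ≤ t →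
      μ {ω | ∃ s : ℝ, t ≤ s ∧ ε < ‖s⁻¹ • A s ω - c‖} ≤
        ENNReal.ofReal (C * Real.exp (-ρ * t)) := by
  intro ε hε
  obtain ⟨N, p, hp, hN⟩ := hLD (ε / 2) (half_pos hε)
  have hgap : 0 < 1 - Real.exp (-(p * δ)) :=
    sub_pos.2 (Real.exp_lt_one_iff.2 (neg_lt_zero.2 (mul_pos hp hδ)))
  refine ⟨max δ (max (N * δ) ((K + ‖c‖) * δ / (ε - ε / 2))), lt_max_of_lt_left hδ,
    Real.exp (p * δ) / (1 - Real.exp (-(p * δ))), by positivity, p, hp, fun t ht ↦ ?_⟩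
  obtain ⟨hδt, hNt, hKt⟩ : δ ≤ t ∧ N * δ ≤ t ∧ (K + ‖c‖) * δ / (ε - ε / 2) ≤ t := by
    simpa only [max_le_iff] using ht
  exact measure_exists_ge_lt_norm_inv_smul_sub_le hA hδ (half_lt_self hε) hp hN hδt hNt hKt

end LargeDeviations

/-- an exponential large-deviations bound for the time averages
`(nδ)⁻¹ ∫₀^{nδ} f(X_s) ds` along arithmetic sequences upgrades to an exponential bound
for the running supremum `sup_{s ≥ t} |s⁻¹ ∫₀^s f(X_u) du − c|`. -/
theorem stmt8
    {Ω : Type*} [MeasurableSpace Ω] (P : Measure Ω) [IsProbabilityMeasure P]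
    {E : Type*} [MetricSpace E] [MeasurableSpace E] [BorelSpace E]
    (X : ℝ → Ω → E) (hX : Measurable fun p : ℝ × Ω => X p.1 p.2)
    (f : E → ℝ) (hf : Measurable f) (Cf : ℝ) (hfb : ∀ x, |f x| ≤ Cf)
    (c : ℝ)
    (hLD : ∀ δ : ℝ, 0 < δ → ∀ ε : ℝ, 0 < ε → ∃ N : ℕ, ∃ p : ℝ, 0 < p ∧
      ∀ n : ℕ, N ≤ n →
        P {ω | ε < |(↑n * δ)⁻¹ * (∫ s in (0:ℝ)..(↑n * δ), f (X s ω)) - c|}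
          ≤ ENNReal.ofReal (Real.exp (-p * ↑n * δ))) :
    ∀ ε : ℝ, 0 < ε → ∃ S : ℝ, 0 < S ∧ ∃ C : ℝ, 0 < C ∧ ∃ ρ : ℝ, 0 < ρ ∧
      ∀ t : ℝ, S ≤ t →
        P {ω | ∃ s : ℝ, t ≤ s ∧ ε < |s⁻¹ * (∫ u in (0:ℝ)..s, f (X u ω)) - c|}
          ≤ ENNReal.ofReal (C * Real.exp (-ρ * t)) :=
  have hlip ω : LipschitzOnWith Cf.toNNReal (fun s ↦ ∫ u in (0 : ℝ)..s, f (X u ω)) (Ici 0) :=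
    (lipschitzWith_intervalIntegral_of_norm_le
      (hf.comp (hX.comp measurable_prodMk_right)).aestronglyMeasurable
      (fun _ ↦ (hfb _).trans (Real.le_coe_toNNReal Cf)) 0).lipschitzOnWith
  stmt8_general hlip one_pos (hLD 1 one_pos)
end

section
/- Assume f ≤ 0 pointwise and let M > 0 and T > 0. Define w := sup{E[∫₀^τ f(X_s) ds + g(X_τ)] : τ a stopping time with E[τ] ≤ M} and w_T := sup{E[∫₀^τ f(X_s) ds + g(X_τ)] : τ a stopping time with τ ≤ T a.s.}. Then w ≤ w_T + 2‖g‖ M / T. In particular, the finite-horizon value functions converge to w as T → ∞, uniformly over any family along which M stays bounded. -/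
open MeasureTheory Filter Set
open scoped ENNReal Topology

/-!
Truncating an admissible time `τ` at `T` keeps it a stopping time and, since the running reward is
nonpositive, can only increase the running part. The terminal parts differ only on `{T < τ}`, by at
most `2‖g‖`, and there `2‖g‖ ≤ (2‖g‖ / T) τ`: this is Markov's inequality in pathwise form. Taking
expectations gives the bound, because `E[τ] ≤ M`.
-/

section Measurability

variable {Ω : Type*} {m0 : MeasurableSpace Ω}

theorem stronglyMeasurable_uncurry_of_isStronglyProgressive {ι β : Type*} [LinearOrder ι]
    [TopologicalSpace ι] [OrderTopology ι] [SecondCountableTopology ι] [MeasurableSpace ι]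
    [OpensMeasurableSpace ι] [TopologicalSpace β] [TopologicalSpace.PseudoMetrizableSpace β]
    {𝓕 : Filtration ι m0} {u : ι → Ω → β} (hu : IsStronglyProgressive 𝓕 u) :
    StronglyMeasurable (Function.uncurry u) := by
  cases isEmpty_or_nonempty ι
  · exact .of_subsingleton_dom
  obtain ⟨t, ht⟩ := exists_seq_tendsto (atTop : Filter ι)
  refine stronglyMeasurable_of_tendsto atTop (f := fun n p => u (min p.1 (t n)) p.2)
    (fun n => ?_) (tendsto_pi_nhds.2 fun p => ?_)
  · have h_trunc : Measurable[_, Subtype.instMeasurableSpace.prod (𝓕 (t n))] fun p : ι × Ω =>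
        ((⟨min p.1 (t n), min_le_right _ _⟩ : Iic (t n)), p.2) :=
      (measurable_fst.min measurable_const).subtype_mk.prodMk
        (measurable_snd.mono le_rfl (𝓕.le _))
    exact (hu (t n)).comp_measurable h_trunc
  · refine tendsto_const_nhds.congr' ?_
    filter_upwards [ht.eventually_ge_atTop p.1] with n hn
    rw [min_eq_left hn, Function.uncurry]

theorem stronglyMeasurable_intervalIntegral {α E : Type*} [MeasurableSpace α]
    [NormedAddCommGroup E] [NormedSpace ℝ E] {μ : Measure ℝ} [SFinite μ] {f : α → ℝ → E}
    (hf : StronglyMeasurable (Function.uncurry f)) {a b : α → ℝ} (ha : Measurable a)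
    (hb : Measurable b) :
    StronglyMeasurable fun x => ∫ s in a x..b x, f x s ∂μ := by
  have h_Ioc {a b : α → ℝ} (ha : Measurable a) (hb : Measurable b) :
      StronglyMeasurable fun x => ∫ s in Ioc (a x) (b x), f x s ∂μ := by
    have h_region : MeasurableSet {p : α × ℝ | p.2 ∈ Ioc (a p.1) (b p.1)} :=
      (measurableSet_lt (ha.comp measurable_fst) measurable_snd).inter
        (measurableSet_le measurable_snd (hb.comp measurable_fst))
    simp_rw [← integral_indicator measurableSet_Ioc]
    exact (hf.indicator h_region).integral_prod_right'
  exact (h_Ioc ha hb).sub (h_Ioc hb ha)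

theorem measurable_of_isStoppingTime_coe {ι : Type*} [LinearOrder ι] [TopologicalSpace ι]
    [OrderTopology ι] [SecondCountableTopology ι] [MeasurableSpace ι] [BorelSpace ι]
    {𝓕 : Filtration ι m0} {τ : Ω → ι} (hτ : IsStoppingTime 𝓕 fun ω => (τ ω : WithTop ι)) :
    Measurable τ :=
  measurable_of_Iic fun i => by
    simpa only [WithTop.coe_le_coe, preimage, mem_Iic] using 𝓕.le i _ (hτ i)

end Measurability

section StoppingReward

variable {Ω : Type*} {c G : ℝ → Ω → ℝ} {τ : Ω → ℝ} {C B T : ℝ} {ω : Ω}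

/-- The reward collected by stopping at `τ`: the running reward `c` integrated over `[0, τ]`, plus
the terminal reward `G` at time `τ`. The state process of the stopping problem is absorbed into
`c` and `G`. -/
noncomputable def stoppingReward (c G : ℝ → Ω → ℝ) (τ : Ω → ℝ) (ω : Ω) : ℝ :=
  (∫ s in (0 : ℝ)..τ ω, c s ω) + G (τ ω) ω

theorem stoppingReward_le (hc : ∀ s, c s ω ≤ 0) (hG : ∀ s, G s ω ≤ B) (hτ : 0 ≤ τ ω) :
    stoppingReward c G τ ω ≤ B := by
  have h_running : ∫ s in (0 : ℝ)..τ ω, c s ω ≤ 0 := by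
    rw [intervalIntegral.integral_of_le hτ]
    exact integral_nonpos hc
  exact add_le_of_nonpos_of_le h_running (hG _)

theorem stoppingReward_le_stoppingReward_min_add
    (hc_int : IntervalIntegrable (c · ω) volume 0 (τ ω)) (hc : ∀ s, c s ω ≤ 0)
    (hG : ∀ s, |G s ω| ≤ B) (hT : 0 < T) (hτ : 0 ≤ τ ω) :
    stoppingReward c G τ ω ≤ stoppingReward c G (fun ω => min (τ ω) T) ω + 2 * B / T * τ ω := by
  have hB : 0 ≤ B := (abs_nonneg _).trans (hG 0)
  have h_running : ∫ s in (0 : ℝ)..τ ω, c s ω ≤ ∫ s in (0 : ℝ)..min (τ ω) T, c s ω := by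
    have h_neg := intervalIntegral.integral_mono_interval le_rfl (le_min hτ hT.le)
      (min_le_left (τ ω) T) (ae_of_all _ fun s => neg_nonneg.2 (hc s)) hc_int.neg
    simpa only [Pi.neg_apply, intervalIntegral.integral_neg, neg_le_neg_iff] using h_neg
  have h_terminal : G (τ ω) ω ≤ G (min (τ ω) T) ω + 2 * B / T * τ ω := by
    rcases le_total (τ ω) T with h_le | h_ge
    · rw [min_eq_left h_le]
      exact le_add_of_nonneg_right (by positivity)
    · have h_markov : 2 * B ≤ 2 * B / T * τ ω := by
        rw [div_mul_eq_mul_div, le_div_iff₀ hT]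
        gcongr
      rw [min_eq_right h_ge]
      linarith [(abs_le.1 (hG (τ ω))).2, (abs_le.1 (hG T)).1]
  unfold stoppingReward
  linarith

variable {m0 : MeasurableSpace Ω} {P : Measure Ω} [IsFiniteMeasure P]

theorem integrable_stoppingReward (hc : Measurable (Function.uncurry c))
    (hG : Measurable (Function.uncurry G)) (hcb : ∀ s ω, |c s ω| ≤ C) (hGb : ∀ s ω, |G s ω| ≤ B)
    (hτ : Measurable τ) (hτ_int : Integrable τ P) :
    Integrable (stoppingReward c G τ) P := by
  refine Integrable.add ?_ ?_
  · have h_meas : StronglyMeasurable fun ω => ∫ s in (0 : ℝ)..τ ω, c s ω :=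
      stronglyMeasurable_intervalIntegral (f := fun ω s => c s ω)
        (hc.comp measurable_swap).stronglyMeasurable measurable_const hτ
    refine (hτ_int.abs.const_mul C).mono' h_meas.aestronglyMeasurable (ae_of_all _ fun ω => ?_)
    simpa only [sub_zero] using intervalIntegral.norm_integral_le_of_norm_le_const
      (a := 0) (b := τ ω) (f := (c · ω)) fun s _ => hcb s ω
  · exact .of_bound (hG.comp (hτ.prodMk measurable_id)).aestronglyMeasurable B
      (ae_of_all _ fun ω => hGb _ ω)

theorem integral_stoppingReward_le (hc : Measurable (Function.uncurry c))
    (hG : Measurable (Function.uncurry G)) (hcb : ∀ s ω, |c s ω| ≤ C) (hGb : ∀ s ω, |G s ω| ≤ B)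
    (hc_nonpos : ∀ s ω, c s ω ≤ 0) (hτ : Measurable τ) (hτ_nonneg : ∀ ω, 0 ≤ τ ω)
    (hτ_int : Integrable τ P) :
    ∫ ω, stoppingReward c G τ ω ∂P ≤ P.real univ * B :=
  calc ∫ ω, stoppingReward c G τ ω ∂P
    _ ≤ ∫ _, B ∂P := integral_mono (integrable_stoppingReward hc hG hcb hGb hτ hτ_int)
        (integrable_const B) fun ω =>
          stoppingReward_le (hc_nonpos · ω) (fun s => (abs_le.1 (hGb s ω)).2) (hτ_nonneg ω)
    _ = P.real univ * B := by rw [integral_const, smul_eq_mul]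

theorem integral_stoppingReward_le_integral_min_add (hc : Measurable (Function.uncurry c))
    (hG : Measurable (Function.uncurry G)) (hcb : ∀ s ω, |c s ω| ≤ C) (hGb : ∀ s ω, |G s ω| ≤ B)
    (hc_nonpos : ∀ s ω, c s ω ≤ 0) (hT : 0 < T) (hτ : Measurable τ) (hτ_nonneg : ∀ ω, 0 ≤ τ ω)
    (hτ_int : Integrable τ P) :
    ∫ ω, stoppingReward c G τ ω ∂P ≤
      ∫ ω, stoppingReward c G (fun ω => min (τ ω) T) ω ∂P + 2 * B / T * ∫ ω, τ ω ∂P := by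
  have h_reward := integrable_stoppingReward hc hG hcb hGb hτ hτ_int
  have h_reward_min := integrable_stoppingReward hc hG hcb hGb (hτ.min measurable_const)
    (hτ_int.inf (integrable_const T))
  have h_path (ω : Ω) : IntervalIntegrable (c · ω) volume 0 (τ ω) :=
    intervalIntegrable_const.mono_fun' (hc.comp measurable_prodMk_right).aestronglyMeasurable
      (ae_of_all _ fun s => hcb s ω)
  calc ∫ ω, stoppingReward c G τ ω ∂P
    _ ≤ ∫ ω, (stoppingReward c G (fun ω => min (τ ω) T) ω + 2 * B / T * τ ω) ∂P :=
      integral_mono h_reward (h_reward_min.add (hτ_int.const_mul _)) fun ω =>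
        stoppingReward_le_stoppingReward_min_add (h_path ω) (hc_nonpos · ω) (hGb · ω) hT
          (hτ_nonneg ω)
    _ = _ := by rw [integral_add h_reward_min (hτ_int.const_mul _), integral_const_mul]

end StoppingReward

section Value

variable {Ω : Type*} {m0 : MeasurableSpace Ω} {P : Measure Ω} {𝓕 : Filtration ℝ m0}
  {c G : ℝ → Ω → ℝ} {τ : Ω → ℝ} {C B M T : ℝ}

/-- The value `w` of the stopping problem over stopping times `τ` with `E[τ] ≤ M`. It is a supremum
in `ℝ`, hence meaningful only when the set of expected rewards is nonempty and bounded above. -/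
noncomputable def meanConstrainedValue (P : Measure Ω) (𝓕 : Filtration ℝ m0) (c G : ℝ → Ω → ℝ)
    (M : ℝ) : ℝ :=
  sSup {v : ℝ | ∃ τ : Ω → ℝ, IsStoppingTime 𝓕 (fun ω => (τ ω : WithTop ℝ)) ∧ (∀ ω, 0 ≤ τ ω) ∧
    Integrable τ P ∧ ∫ ω, τ ω ∂P ≤ M ∧ v = ∫ ω, stoppingReward c G τ ω ∂P}

/-- The finite-horizon value `w_T`, over stopping times `τ` with `τ ≤ T` almost surely. As for
`meanConstrainedValue`, the supremum is taken in `ℝ`. -/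
noncomputable def finiteHorizonValue (P : Measure Ω) (𝓕 : Filtration ℝ m0) (c G : ℝ → Ω → ℝ)
    (T : ℝ) : ℝ :=
  sSup {v : ℝ | ∃ τ : Ω → ℝ, IsStoppingTime 𝓕 (fun ω => (τ ω : WithTop ℝ)) ∧ (∀ ω, 0 ≤ τ ω) ∧
    (∀ᵐ ω ∂P, τ ω ≤ T) ∧ v = ∫ ω, stoppingReward c G τ ω ∂P}

theorem meanConstrainedValue_le (hM : 0 ≤ M) {b : ℝ}
    (h : ∀ τ : Ω → ℝ, IsStoppingTime 𝓕 (fun ω => (τ ω : WithTop ℝ)) → (∀ ω, 0 ≤ τ ω) →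
      Integrable τ P → ∫ ω, τ ω ∂P ≤ M → ∫ ω, stoppingReward c G τ ω ∂P ≤ b) :
    meanConstrainedValue P 𝓕 c G M ≤ b := by
  refine csSup_le ⟨_, fun _ => 0, isStoppingTime_const 𝓕 (0 : ℝ), fun _ => le_rfl,
    integrable_zero _ _ _, by rwa [integral_zero], rfl⟩ ?_
  rintro v ⟨τ, hτ, hτ_nonneg, hτ_int, hτ_mean, rfl⟩
  exact h τ hτ hτ_nonneg hτ_int hτ_mean

variable [IsFiniteMeasure P]

theorem integral_stoppingReward_le_finiteHorizonValue (hc : Measurable (Function.uncurry c))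
    (hG : Measurable (Function.uncurry G)) (hcb : ∀ s ω, |c s ω| ≤ C) (hGb : ∀ s ω, |G s ω| ≤ B)
    (hc_nonpos : ∀ s ω, c s ω ≤ 0) (hτ : IsStoppingTime 𝓕 fun ω => (τ ω : WithTop ℝ))
    (hτ_nonneg : ∀ ω, 0 ≤ τ ω) (hτ_le : ∀ᵐ ω ∂P, τ ω ≤ T) :
    ∫ ω, stoppingReward c G τ ω ∂P ≤ finiteHorizonValue P 𝓕 c G T := by
  refine le_csSup ⟨P.real univ * B, ?_⟩ ⟨τ, hτ, hτ_nonneg, hτ_le, rfl⟩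
  rintro v ⟨σ, hσ, hσ_nonneg, hσ_le, rfl⟩
  have hσ_meas := measurable_of_isStoppingTime_coe hσ
  have hσ_int : Integrable σ P := .of_mem_Icc 0 T hσ_meas.aemeasurable
    (hσ_le.mono fun ω hω => ⟨hσ_nonneg ω, hω⟩)
  exact integral_stoppingReward_le hc hG hcb hGb hc_nonpos hσ_meas hσ_nonneg hσ_int

theorem stmt10_general [Nonempty Ω] (hc : Measurable (Function.uncurry c))
    (hG : Measurable (Function.uncurry G)) (hcb : ∀ s ω, |c s ω| ≤ C) (hGb : ∀ s ω, |G s ω| ≤ B)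
    (hc_nonpos : ∀ s ω, c s ω ≤ 0) (hM : 0 ≤ M) (hT : 0 < T) :
    meanConstrainedValue P 𝓕 c G M ≤ finiteHorizonValue P 𝓕 c G T + 2 * B * M / T := by
  have hB : 0 ≤ B := (abs_nonneg _).trans (hGb 0 (Classical.arbitrary Ω))
  refine meanConstrainedValue_le hM fun τ hτ hτ_nonneg hτ_int hτ_mean => ?_
  have h_trunc : IsStoppingTime 𝓕 fun ω => ((min (τ ω) T : ℝ) : WithTop ℝ) := by
    simpa only [WithTop.coe_min] using hτ.min_const T
  calc ∫ ω, stoppingReward c G τ ω ∂P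
    _ ≤ ∫ ω, stoppingReward c G (fun ω => min (τ ω) T) ω ∂P + 2 * B / T * ∫ ω, τ ω ∂P :=
      integral_stoppingReward_le_integral_min_add hc hG hcb hGb hc_nonpos hT
        (measurable_of_isStoppingTime_coe hτ) hτ_nonneg hτ_int
    _ ≤ finiteHorizonValue P 𝓕 c G T + 2 * B / T * M := by
      gcongr
      exact integral_stoppingReward_le_finiteHorizonValue hc hG hcb hGb hc_nonpos h_trunc
        (fun ω => le_min (hτ_nonneg ω) hT.le) (ae_of_all _ fun ω => min_le_right _ _)
    _ = finiteHorizonValue P 𝓕 c G T + 2 * B * M / T := by rw [div_mul_eq_mul_div]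

end Value

/-- for `f ≤ 0`, the value `w` of the stopping problem over stopping times
with `E[τ] ≤ M` exceeds the finite-horizon value `w_T` by at most `2‖g‖M/T`. -/
theorem stmt10
    {Ω : Type*} {m0 : MeasurableSpace Ω} (P : Measure Ω) [IsProbabilityMeasure P]
    (𝓕 : Filtration ℝ m0)
    {E : Type*} [MetricSpace E] [MeasurableSpace E] [BorelSpace E]
    (X : ℝ → Ω → E) (hX : ProgMeasurable 𝓕 X)
    (f g : E → ℝ) (hf : Measurable f) (hg : Measurable g)
    (Cf Cg : ℝ) (hfb : ∀ x, |f x| ≤ Cf) (hgb : ∀ x, |g x| ≤ Cg)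
    (hfneg : ∀ x, f x ≤ 0)
    (M T : ℝ) (hM : 0 < M) (hT : 0 < T) :
    sSup {v : ℝ | ∃ τ : Ω → ℝ, IsStoppingTime 𝓕 (fun ω => (τ ω : WithTop ℝ)) ∧ (∀ ω, 0 ≤ τ ω) ∧
        Integrable τ P ∧ (∫ ω, τ ω ∂P) ≤ M ∧
        v = ∫ ω, ((∫ s in (0:ℝ)..(τ ω), f (X s ω)) + g (X (τ ω) ω)) ∂P}
      ≤ sSup {v : ℝ | ∃ τ : Ω → ℝ, IsStoppingTime 𝓕 (fun ω => (τ ω : WithTop ℝ)) ∧ (∀ ω, 0 ≤ τ ω) ∧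
          (∀ᵐ ω ∂P, τ ω ≤ T) ∧
          v = ∫ ω, ((∫ s in (0:ℝ)..(τ ω), f (X s ω)) + g (X (τ ω) ω)) ∂P}
        + 2 * Cg * M / T := by
  have := nonempty_of_isProbabilityMeasure P
  have hXm := (stronglyMeasurable_uncurry_of_isStronglyProgressive hX).measurable
  exact stmt10_general (c := fun s ω => f (X s ω)) (G := fun s ω => g (X s ω))
    (hf.comp hXm) (hg.comp hXm) (fun _ _ => hfb _) (fun _ _ => hgb _)
    (fun _ _ => hfneg _) hM.le hT
end

section
/- Let (E, ρ) be a metric space in which every closed ball is compact, fix x₀ ∈ E, let μ be a Borel probability measure on E, and let f : E → ℝ be continuous and bounded with ∫ f dμ < 0. Then there exists a continuous bounded function f̄ : E → ℝ such that f̄ ≥ f pointwise, ∫ f̄ dμ ≤ (∫ f dμ)/2 < 0, and the set {x ∈ E : f̄(x) ≤ ∫ f̄ dμ} is compact. (One may take f̄ = f ∨ (z_N · f), where z_N(x) = 1 − min(ρ(x, B_N), 1), B_N is the closed ball of radius N around x₀, and N is chosen so large that ∫_{E∖B_N} |f| dμ < −(∫ f dμ)/4.) -/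
open MeasureTheory Filter Set
open scoped ENNReal Topology

/-!
Multiply the negative part of `f` by a cutoff `z` with values in `[0, 1]`. Away from the support of
`z` the result is nonnegative, so if `z` has compact support then every sublevel set at a negative
level is compact. As the cutoffs exhaust the space, the integrals converge to `∫ f dμ` by dominated
convergence, so a single large cutoff costs arbitrarily little.
-/

section DampNegPart

variable {X : Type*} {z f : X → ℝ} {x : X}

/-- The function `f ∨ (z · f)`: for a cutoff `z` with values in `[0, 1]`, this is `f` with its
negative part multiplied by `z`. -/
def dampNegPart (z f : X → ℝ) (x : X) : ℝ :=
  max (f x) (z x * f x)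

lemma le_dampNegPart (z f : X → ℝ) (x : X) : f x ≤ dampNegPart z f x :=
  le_max_left _ _

lemma abs_dampNegPart_le (hz : |z x| ≤ 1) : |dampNegPart z f x| ≤ |f x| := by
  have hzf : |z x * f x| ≤ |f x| := by
    rw [abs_mul]
    exact mul_le_of_le_one_left (abs_nonneg _) hz
  exact abs_max_le_max_abs_abs.trans (max_le le_rfl hzf)

lemma dampNegPart_nonneg_of_eq_zero (hz : z x = 0) : 0 ≤ dampNegPart z f x := by
  simp [dampNegPart, hz]

section Topology

variable [TopologicalSpace X]

lemma continuous_dampNegPart (hz : Continuous z) (hf : Continuous f) :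
    Continuous (dampNegPart z f) :=
  hf.max (hz.mul hf)

lemma isCompact_dampNegPart_le (hz : Continuous z) (hzc : HasCompactSupport z)
    (hf : Continuous f) {a : ℝ} (ha : a < 0) : IsCompact {x | dampNegPart z f x ≤ a} := by
  refine hzc.isCompact.of_isClosed_subset
    (isClosed_le (continuous_dampNegPart hz hf) continuous_const) fun x hx ↦ ?_
  by_contra hxz
  have hnonneg := dampNegPart_nonneg_of_eq_zero (f := f) (image_eq_zero_of_notMem_tsupport hxz)
  exact (hx.trans_lt ha).not_ge hnonneg

end Topology

lemma tendsto_integral_dampNegPart [MeasurableSpace X] {μ : Measure X} {ι : Type*} {l : Filter ι}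
    [l.IsCountablyGenerated] {z : ι → X → ℝ} (hf : Integrable f μ)
    (hzm : ∀ᶠ i in l, AEStronglyMeasurable (z i) μ) (hz : ∀ᶠ i in l, ∀ᵐ x ∂μ, |z i x| ≤ 1)
    (hlim : ∀ᵐ x ∂μ, Tendsto (z · x) l (𝓝 1)) :
    Tendsto (fun i ↦ ∫ x, dampNegPart (z i) f x ∂μ) l (𝓝 (∫ x, f x ∂μ)) := by
  refine tendsto_integral_filter_of_dominated_convergence (fun x ↦ |f x|)
    (hzm.mono fun i hi ↦ hf.1.sup (hi.mul hf.1))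
    (hz.mono fun i hi ↦ hi.mono fun x hx ↦ abs_dampNegPart_le hx) hf.abs
    (hlim.mono fun x hx ↦ ?_)
  simpa only [dampNegPart, one_mul, max_self] using
    (tendsto_const_nhds (x := f x)).max (hx.mul_const (f x))

end DampNegPart

section Cutoff

variable {X : Type*} [TopologicalSpace X] [R1Space X] [LocallyCompactSpace X] [SigmaCompactSpace X]

lemma exists_seq_hasCompactSupport_eventually_eq_one :
    ∃ z : ℕ → C(X, ℝ), (∀ n, HasCompactSupport (z n)) ∧ (∀ n x, z n x ∈ Icc (0 : ℝ) 1) ∧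
      ∀ x, ∀ᶠ n in atTop, z n x = 1 := by
  choose z hz_one _ hz_supp hz_mem using fun n ↦ exists_continuous_one_zero_of_isCompact
    (isCompact_compactCovering X n) isClosed_empty (disjoint_empty _)
  refine ⟨z, hz_supp, hz_mem, fun x ↦ ?_⟩
  obtain ⟨m, hm⟩ := exists_mem_compactCovering x
  filter_upwards [eventually_ge_atTop m] with n hn
  exact hz_one n (compactCovering_subset X hn hm)

theorem stmt11_general [MeasurableSpace X] [OpensMeasurableSpace X] {μ : Measure X} {f : X → ℝ}
    (hfi : Integrable f μ) (hfc : Continuous f) {c : ℝ} (hc : ∫ x, f x ∂μ < c) :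
    ∃ g : X → ℝ, Continuous g ∧ (∀ x, f x ≤ g x) ∧ (∀ x, |g x| ≤ |f x|) ∧
      ∫ x, g x ∂μ < c ∧ ∀ a < 0, IsCompact {x | g x ≤ a} := by
  obtain ⟨z, hz_supp, hz_mem, hz_one⟩ := exists_seq_hasCompactSupport_eventually_eq_one (X := X)
  have hz_abs (n : ℕ) (x : X) : |z n x| ≤ 1 :=
    abs_le.2 ⟨by linarith [(hz_mem n x).1], (hz_mem n x).2⟩
  have hlim : Tendsto (fun n ↦ ∫ x, dampNegPart (z n) f x ∂μ) atTop (𝓝 (∫ x, f x ∂μ)) :=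
    tendsto_integral_dampNegPart hfi
      (.of_forall fun n ↦ (z n).continuous.aestronglyMeasurable)
      (.of_forall fun n ↦ .of_forall (hz_abs n))
      (.of_forall fun x ↦ tendsto_nhds_of_eventually_eq (hz_one x))
  obtain ⟨n, hn⟩ := (hlim.eventually_lt_const hc).exists
  exact ⟨dampNegPart (z n) f, continuous_dampNegPart (z n).continuous hfc, le_dampNegPart _ _,
    fun x ↦ abs_dampNegPart_le (hz_abs n x), hn,
    fun a ha ↦ isCompact_dampNegPart_le (z n).continuous (hz_supp n) hfc ha⟩

end Cutoff

/-- if every closed ball of `E` is compact, `μ` is a Borel probability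
measure and `f` is bounded continuous with `∫ f dμ < 0`, then there is a bounded
continuous `f̄ ≥ f` with `∫ f̄ dμ ≤ (∫ f dμ)/2 < 0` whose sublevel set
`{x : f̄(x) ≤ ∫ f̄ dμ}` is compact. -/
theorem stmt11
    {E : Type*} [MetricSpace E] [ProperSpace E]
    [MeasurableSpace E] [BorelSpace E]
    (x₀ : E)
    (μ : Measure E) [IsProbabilityMeasure μ]
    (f : E → ℝ) (hfc : Continuous f) (Cf : ℝ) (hfb : ∀ x, |f x| ≤ Cf)
    (hneg : ∫ x, f x ∂μ < 0) :
    ∃ fbar : E → ℝ, Continuous fbar ∧ (∃ C : ℝ, ∀ x, |fbar x| ≤ C) ∧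
      (∀ x, f x ≤ fbar x) ∧
      (∫ x, fbar x ∂μ) ≤ (∫ x, f x ∂μ) / 2 ∧ (∫ x, f x ∂μ) / 2 < 0 ∧
      IsCompact {x : E | fbar x ≤ ∫ y, fbar y ∂μ} := by
  obtain ⟨g, hg, hfg, hgf, hint, hcpt⟩ := stmt11_general (.of_integral_ne_zero hneg.ne) hfc
    (c := (∫ x, f x ∂μ) / 2) (by linarith)
  exact ⟨g, hg, ⟨Cf, fun x ↦ (hgf x).trans (hfb x)⟩, hfg, hint.le,
    div_neg_of_neg_of_pos hneg two_pos, hcpt _ (by linarith)⟩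
end
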